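/- arXiv:2002.09294 — 3 statements merged into one kernel-verified Lean document; each statement's English description precedes it below -/
import Mathlib

section
/- Let X be a standard Borel space and E an aperiodic countable Borel equivalence relation on X admitting an E-invariant Borel probability measure. Then there is a Borel coboundary ρ : E → (0,∞) such that there is neither an injective Borel compression of the quotient of ρ by a finite Borel subequivalence relation of E nor a ρ-invariant Borel probability measure. -/
open MeasureTheory Set ENNReal

namespace CocycleNadkarni

variable {X : Type*} {Γ : Type*}

/-- The `ρ`-size of `Y` relative to the point `z`: `∑_{y ∈ Y} ρ(y, z)`. -/
noncomputable def eSize (ρ : X → X → ℝ) (Y : Set X) (z : X) : ℝ≥0∞ :=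
  ∑' y : Y, ENNReal.ofReal (ρ y z)

/-- The `ρ`-size of `Y` relative to the set `Z`, computed at the point `z`. -/
noncomputable def relSize (ρ : X → X → ℝ) (Y Z : Set X) (z : X) : ℝ≥0∞ :=
  eSize ρ Y z / eSize ρ Z z

/-- Real-valued `ρ`-size (used for finite sets). -/
noncomputable def rSize (ρ : X → X → ℝ) (Y : Set X) (z : X) : ℝ :=
  ∑' y : Y, ρ y z

/-- `∫_C f dμ^ρ_S`, computed at the point `z`. -/
noncomputable def avgOn (ρ : X → X → ℝ) (f : X → ℝ) (S C : Set X) (z : X) : ℝ :=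
  (∑' y : ↥(S ∩ C), f y * ρ y z) / rSize ρ S z

/-- countable Borel equivalence relation -/
def IsCBER [MeasurableSpace X] (E : X → X → Prop) : Prop :=
  Equivalence E ∧ MeasurableSet {p : X × X | E p.1 p.2} ∧ ∀ x : X, {y | E x y}.Countable

/-- Borel cocycle `ρ : E → (0, ∞)` (as a total function whose values off `E` are irrelevant). -/
def IsCocycle [MeasurableSpace X] (E : X → X → Prop) (ρ : X → X → ℝ) : Prop :=
  Measurable (fun p : X × X => ρ p.1 p.2) ∧
    (∀ ⦃x y : X⦄, E x y → 0 < ρ x y) ∧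
    ∀ ⦃x y z : X⦄, E x y → E y z → ρ x z = ρ x y * ρ y z

/-- Borel cocycle into a group `Γ`. -/
def IsGrpCocycle [MeasurableSpace X] [Group Γ] [MeasurableSpace Γ]
    (E : X → X → Prop) (ρ : X → X → Γ) : Prop :=
  Measurable (fun p : X × X => ρ p.1 p.2) ∧
    ∀ ⦃x y z : X⦄, E x y → E y z → ρ x z = ρ x y * ρ y z

/-- finite Borel subequivalence relation of `E` -/
def IsFinSubequiv [MeasurableSpace X] (E F : X → X → Prop) : Prop :=
  Equivalence F ∧ MeasurableSet {p : X × X | F p.1 p.2} ∧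
    (∀ ⦃x y : X⦄, F x y → E x y) ∧ ∀ x : X, {y | F x y}.Finite

/-- finite Borel subequivalence relation of `E` restricted to `W` (extended by the diagonal). -/
def IsFinSubequivOn [MeasurableSpace X] (E : X → X → Prop) (W : Set X)
    (F : X → X → Prop) : Prop :=
  Equivalence F ∧ MeasurableSet {p : X × X | F p.1 p.2} ∧
    (∀ ⦃x y : X⦄, F x y → x = y ∨ (E x y ∧ x ∈ W ∧ y ∈ W)) ∧ ∀ x : X, {y | F x y}.Finite

/-- `ρ`-invariance of a Borel measure. -/
def IsInvariant [MeasurableSpace X] (E : X → X → Prop) (ρ : X → X → ℝ)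
    (μ : Measure X) : Prop :=
  ∀ T : X ≃ᵐ X, (∀ x, E (T x) x) → ∀ B : Set X, MeasurableSet B →
    μ (T '' B) = ∫⁻ x in B, ENNReal.ofReal (ρ (T x) x) ∂μ

/-- invariance w.r.t. the restriction of `ρ` to a set `R` of pairs, via Borel injections
whose graphs are contained in `R⁻¹`. -/
def IsInvariantRel [MeasurableSpace X] (R : Set (X × X)) (ρ : X → X → ℝ)
    (μ : Measure X) : Prop :=
  ∀ (B : Set X) (T : X → X), MeasurableSet B → Measurable T → Set.InjOn T B →
    (∀ x ∈ B, ((T x, x) : X × X) ∈ R) →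
    μ (T '' B) = ∫⁻ x in B, ENNReal.ofReal (ρ (T x) x) ∂μ

/-- a Borel ℕ-coloring of the lacunarity digraph `G^ρ_Z`. -/
def HasColoring [MeasurableSpace X] (E : X → X → Prop) (ρ : X → X → Γ)
    (Z : Set Γ) : Prop :=
  ∃ c : X → ℕ, Measurable c ∧
    ∀ ⦃x y : X⦄, x ≠ y → E x y → ρ x y ∈ Z → c x ≠ c y

/-- smoothness of the cocycle `ρ` restricted to `E` restricted to `W`. -/
def SmoothOn [MeasurableSpace X] (E : X → X → Prop) (ρ : X → X → ℝ)
    (W : Set X) : Prop :=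
  ∃ U : Set ℝ, IsOpen U ∧ (1:ℝ) ∈ U ∧ U ⊆ Set.Ioi 0 ∧
    ∃ c : X → ℕ, Measurable c ∧
      ∀ ⦃x y : X⦄, x ∈ W → y ∈ W → x ≠ y → E x y → ρ x y ∈ U → c x ≠ c y

/-- smoothness of the cocycle `ρ` on `E`. -/
def Smooth [MeasurableSpace X] (E : X → X → Prop) (ρ : X → X → ℝ) : Prop :=
  SmoothOn E ρ Set.univ

/-- `E`-invariance of a set. -/
def EInvariant (E : X → X → Prop) (B : Set X) : Prop :=
  ∀ ⦃x y : X⦄, E x y → x ∈ B → y ∈ B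

/-- a compression of `ρ` over the finite subequivalence relation `F` of `E`. -/
def CompressionOver [MeasurableSpace X] (E F : X → X → Prop) (ρ : X → X → ℝ)
    (φ : X → X) : Prop :=
  (∀ x, E x (φ x)) ∧
  (∀ x : X, relSize ρ (φ ⁻¹' {y | F y x}) {y | F y x} x ≤ 1) ∧
  (∀ x : X, ∃ y, E x y ∧ relSize ρ (φ ⁻¹' {z | F z y}) {z | F z y} y < 1)

/-- a compression of the quotient of `ρ | E | W` by the finite subequivalence relation given
by the setoid `s`, expressed via representatives. -/
def QuotCompressionOn [MeasurableSpace X] (E : X → X → Prop) (ρ : X → X → ℝ)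
    (W : Set X) (s : Setoid X) (φ : Quotient s → Quotient s) : Prop :=
  (∀ ⦃x : X⦄, x ∈ W → ∀ y : X, φ (Quotient.mk s x) = Quotient.mk s y → (E x y ∧ y ∈ W)) ∧
  (∀ ⦃x : X⦄, x ∈ W →
    relSize ρ {y | y ∈ W ∧ φ (Quotient.mk s y) = Quotient.mk s x} {y | s.r y x} x ≤ 1) ∧
  (∀ ⦃x : X⦄, x ∈ W → ∃ y, y ∈ W ∧ E x y ∧
    relSize ρ {z | z ∈ W ∧ φ (Quotient.mk s z) = Quotient.mk s y} {z | s.r z y} y < 1)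


/-- `B` has `ρ`-density at least `ε` relative to `W`. -/
def HasDensityAtLeastOn [MeasurableSpace X] (E : X → X → Prop) (ρ : X → X → ℝ)
    (B W : Set X) (ε : ℝ) : Prop :=
  ∃ F : X → X → Prop, IsFinSubequivOn E W F ∧
    ∀ x ∈ W, ENNReal.ofReal ε ≤ relSize ρ (B ∩ {y | F y x}) {y | F y x} x

/-- `B` has positive `ρ`-density relative to `W`. -/
def HasPosDensityOn [MeasurableSpace X] (E : X → X → Prop) (ρ : X → X → ℝ)
    (B W : Set X) : Prop :=
  ∃ ε : ℝ, 0 < ε ∧ HasDensityAtLeastOn E ρ B W ε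

/-- `B` has σ-positive `ρ`-density relative to `W`. -/
def HasSigmaPosDensityOn [MeasurableSpace X] (E : X → X → Prop) (ρ : X → X → ℝ)
    (B W : Set X) : Prop :=
  ∃ A : ℕ → Set X, (∀ n, MeasurableSet (A n)) ∧ (∀ n, A n ⊆ W) ∧
    (∀ n, ∀ x ∈ A n, ∀ y ∈ W, E x y → y ∈ A n) ∧ W = ⋃ n, A n ∧
    ∀ n, HasPosDensityOn E ρ (B ∩ A n) (A n)

/-
By the Lusin–Novikov and Feldman–Moore theorems, `E` is the orbit relation of countably many Borel
automorphisms, so an invariant measure satisfies the mass transport principle: mass moved along `E`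
in a Borel way is conserved in integral. Choose vanishing Borel markers `B n` and a Borel retraction
onto each of them; the number `w n x` of points sent to `x` has integral `σ univ` for every finite
invariant `σ`, yet `w n x = 0` for large `n`. Hence `f = 1 + ∑ w n` is finite but has infinite
integral against every nonzero invariant measure. Dividing a probability measure invariant for the
coboundary of `f` by `f` would give a nonzero invariant measure with `∫ f = 1`. An injective
compression of a quotient of this coboundary never decreases the total weight of a class, and in
every orbit it either misses a class or strictly increases some weight. This contradicts mass
transport of a bounded, strictly increasing function of the weight, against the given invariant
measure.
-/

section LusinNovikov

open TopologicalSpace Filter PiNat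
open scoped Topology

variable {Z : Type*}

/-- `S` is covered by countably many Borel sets on each of which `p` is injective. The
Lusin–Novikov theorem says that this holds for `S = univ` if the fibres of `p` are countable. -/
def SigmaInjOn [MeasurableSpace Z] (p : Z → X) (S : Set Z) : Prop :=
  ∃ A : ℕ → Set Z, (∀ n, MeasurableSet (A n) ∧ InjOn p (A n)) ∧ S ⊆ ⋃ n, A n

/-- Modulo `p`-σ-injective sets, some fibre of `p` meets every member of `𝒬`. This is the
largeness notion preserved along the Cantor scheme in the proof of the Lusin–Novikov theorem. -/
def HasLargeFiber [MeasurableSpace Z] (p : Z → X) (𝒬 : Set (Set Z)) : Prop :=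
  ∀ S, SigmaInjOn p S → ∃ x, ∀ U ∈ 𝒬, ∃ z ∈ U, z ∉ S ∧ p z = x

/-- `V false` and `V true` are disjoint open sets of diameter at most `ε` whose closures lie in
`U`: one splitting step of a Cantor scheme. -/
structure Splits [PseudoEMetricSpace Z] (ε : ℝ≥0∞) (U : Set Z) (V : Bool → Set Z) : Prop where
  isOpen : ∀ b, IsOpen (V b)
  closure_subset : ∀ b, closure (V b) ⊆ U
  ediam_le : ∀ b, Metric.ediam (V b) ≤ ε
  disjoint : Disjoint (V false) (V true)

namespace SigmaInjOn

variable [MeasurableSpace Z] {p : Z → X} {S T : Set Z}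

theorem mono (hT : SigmaInjOn p T) (hST : S ⊆ T) : SigmaInjOn p S := by
  obtain ⟨A, hA, hTA⟩ := hT
  exact ⟨A, hA, hST.trans hTA⟩

theorem of_injOn (hS : MeasurableSet S) (hp : InjOn p S) : SigmaInjOn p S :=
  ⟨fun _ => S, fun _ => ⟨hS, hp⟩, (iUnion_const S).ge⟩

theorem empty : SigmaInjOn p ∅ :=
  of_injOn .empty (injOn_empty p)

theorem iUnion {ι : Type*} [Countable ι] {S : ι → Set Z} (hS : ∀ i, SigmaInjOn p (S i)) :
    SigmaInjOn p (⋃ i, S i) := by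
  cases isEmpty_or_nonempty ι
  · simpa only [iUnion_of_empty] using empty
  choose A hA hSA using hS
  obtain ⟨e, he⟩ := exists_surjective_nat (ι × ℕ)
  refine ⟨fun n => A (e n).1 (e n).2, fun n => hA _ _, iUnion_subset fun i z hz => ?_⟩
  obtain ⟨k, hk⟩ := mem_iUnion.1 (hSA i hz)
  obtain ⟨n, hn⟩ := he (i, k)
  exact mem_iUnion.2 ⟨n, by rwa [hn]⟩

theorem union (hS : SigmaInjOn p S) (hT : SigmaInjOn p T) : SigmaInjOn p (S ∪ T) := by
  rw [union_eq_iUnion]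
  exact iUnion (Bool.forall_bool.2 ⟨hT, hS⟩)

theorem exists_measurableSet (hS : SigmaInjOn p S) :
    ∃ T, S ⊆ T ∧ MeasurableSet T ∧ SigmaInjOn p T := by
  obtain ⟨A, hA, hSA⟩ := hS
  exact ⟨⋃ n, A n, hSA, .iUnion fun n => (hA n).1, A, hA, subset_rfl⟩

end SigmaInjOn

theorem analyticSet_inter [TopologicalSpace Z] [T2Space Z] {A B : Set Z} (hA : AnalyticSet A)
    (hB : AnalyticSet B) : AnalyticSet (A ∩ B) := by
  rw [inter_eq_iInter]
  exact .iInter (Bool.forall_bool.2 ⟨hB, hA⟩)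

theorem exists_measurableSet_injOn_of_analyticSet [TopologicalSpace Z] [PolishSpace Z]
    [MeasurableSpace Z] [BorelSpace Z] [TopologicalSpace X] [PolishSpace X] [MeasurableSpace X]
    [BorelSpace X] {p : Z → X} (hp : Continuous p) {A : Set Z} (hA : AnalyticSet A)
    (hinj : InjOn p A) : ∃ T, A ⊆ T ∧ MeasurableSet T ∧ InjOn p T := by
  obtain ⟨S, hS, hsep⟩ :=
    exists_seq_separating Z (p := MeasurableSet) MeasurableSet.empty univ
  -- The images of `A ∩ S n` and `A \ S n` are disjoint analytic sets, hence Borel separated.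
  have hsepX : ∀ n, MeasurablySeparable (p '' (A ∩ S n)) (p '' (A ∩ (S n)ᶜ)) := by
    intro n
    refine ((analyticSet_inter hA (hS n).analyticSet).image_of_continuous hp).measurablySeparable
      ((analyticSet_inter hA (hS n).compl.analyticSet).image_of_continuous hp) ?_
    rw [Set.disjoint_left]
    rintro _ ⟨z, ⟨hz, hzS⟩, rfl⟩ ⟨w, ⟨hw, hwS⟩, hwz⟩
    exact hwS (hinj hw hz hwz ▸ hzS)
  choose D hSD hDS hD using hsepX
  refine ⟨⋂ n, {z | z ∈ S n ↔ p z ∈ D n}, fun z hz => mem_iInter.2 fun n => ⟨?_, ?_⟩,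
    .iInter fun n => (hS n).iff (hp.measurable (hD n)), fun z hz w hw hzw => ?_⟩
  · exact fun hzS => hSD n ⟨z, ⟨hz, hzS⟩, rfl⟩
  · exact fun hzD => by_contra fun hzS => Set.disjoint_left.1 (hDS n) ⟨z, ⟨hz, hzS⟩, rfl⟩ hzD
  · refine hsep z trivial w trivial fun n => ?_
    have hzD : z ∈ S n ↔ p z ∈ D n := mem_iInter.1 hz n
    have hwD : w ∈ S n ↔ p w ∈ D n := mem_iInter.1 hw n
    rw [hzD, hwD, hzw]

theorem exists_splits_of_ne [MetricSpace Z] {B : Set (Set Z)} (hB : IsTopologicalBasis B)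
    {ε : ℝ≥0∞} (hε : ε ≠ 0) {U : Set Z} (hU : IsOpen U) {z w : Z} (hz : z ∈ U) (hw : w ∈ U)
    (hzw : z ≠ w) :
    ∃ V : Bool → B, Splits ε U (fun b => V b) ∧ z ∈ (V false : Set Z) ∧ w ∈ (V true : Set Z) := by
  obtain ⟨O, O', hO, hO', hzO, hwO', hdisj⟩ := t2_separation hzw
  have exists_nhd : ∀ {y O}, y ∈ U → IsOpen O → y ∈ O →
      ∃ V ∈ B, y ∈ V ∧ closure V ⊆ U ∩ O ∩ Metric.eball y (ε / 2) := fun hyU hO hyO =>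
    hB.exists_closure_subset <| Filter.inter_mem
      (Filter.inter_mem (hU.mem_nhds hyU) (hO.mem_nhds hyO))
      (Metric.eball_mem_nhds _ (ENNReal.half_pos hε))
  have ediam_le : ∀ {y O V}, closure V ⊆ U ∩ O ∩ Metric.eball y (ε / 2) →
      Metric.ediam V ≤ ε := fun hV => by
    refine (Metric.ediam_mono (subset_closure.trans (hV.trans inter_subset_right))).trans ?_
    exact Metric.ediam_eball_le.trans ENNReal.mul_div_le
  obtain ⟨V, hVB, hzV, hV⟩ := exists_nhd hz hO hzO
  obtain ⟨W, hWB, hwW, hW⟩ := exists_nhd hw hO' hwO'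
  refine ⟨fun b => cond b ⟨W, hWB⟩ ⟨V, hVB⟩, ⟨?_, ?_, ?_, ?_⟩, hzV, hwW⟩
  · exact Bool.forall_bool.2 ⟨hB.isOpen hVB, hB.isOpen hWB⟩
  · exact Bool.forall_bool.2 ⟨hV.trans (inter_subset_left.trans inter_subset_left),
      hW.trans (inter_subset_left.trans inter_subset_left)⟩
  · exact Bool.forall_bool.2 ⟨ediam_le hV, ediam_le hW⟩
  · exact hdisj.mono (subset_closure.trans (hV.trans (inter_subset_left.trans inter_subset_right)))
      (subset_closure.trans (hW.trans (inter_subset_left.trans inter_subset_right)))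

namespace HasLargeFiber

theorem mono [MeasurableSpace Z] {p : Z → X} {𝒬 ℛ : Set (Set Z)} (h : HasLargeFiber p ℛ)
    (h𝒬ℛ : 𝒬 ⊆ ℛ) : HasLargeFiber p 𝒬 := fun S hS =>
  (h S hS).imp fun _ hx U hU => hx U (h𝒬ℛ hU)

variable [MetricSpace Z] [CompleteSpace Z] [SecondCountableTopology Z] [MeasurableSpace Z]
  [BorelSpace Z] [TopologicalSpace X] [PolishSpace X] [MeasurableSpace X] [BorelSpace X]
  {p : Z → X} {ε : ℝ≥0∞}

theorem not_injOn (hp : Continuous p) {U : Set Z} {𝒬 : Set (Set Z)} (hU : IsOpen U)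
    (h𝒬 : 𝒬.Countable) (h𝒬o : ∀ W ∈ 𝒬, IsOpen W) (h : HasLargeFiber p (insert U 𝒬)) {S : Set Z}
    (hS : SigmaInjOn p S) (hSm : MeasurableSet S) :
    ¬InjOn p ((U ∩ Sᶜ) ∩ p ⁻¹' ⋂ W ∈ insert U 𝒬, p '' (W ∩ Sᶜ)) := by
  intro hinj
  have han : ∀ W ∈ insert U 𝒬, AnalyticSet (W ∩ Sᶜ) := by
    have hopen : ∀ W ∈ insert U 𝒬, IsOpen W := forall_mem_insert.2 ⟨hU, h𝒬o⟩
    exact fun W hW => ((hopen W hW).measurableSet.inter hSm.compl).analyticSet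
  have hanP : AnalyticSet (⋂ W ∈ insert U 𝒬, p '' (W ∩ Sᶜ)) := by
    have := (h𝒬.insert U).to_subtype
    have : Nonempty ↥(insert U 𝒬) := ⟨⟨U, mem_insert U 𝒬⟩⟩
    rw [biInter_eq_iInter]
    exact .iInter fun W => (han W W.2).image_of_continuous hp
  obtain ⟨T, hAT, hT, hTinj⟩ := exists_measurableSet_injOn_of_analyticSet hp
    (analyticSet_inter (han U (mem_insert _ _)) (hanP.preimage hp)) hinj
  obtain ⟨x, hx⟩ := h (S ∪ T) (hS.union (.of_injOn hT hTinj))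
  obtain ⟨z, hzU, hzST, rfl⟩ := hx U (mem_insert _ _)
  refine hzST (.inr (hAT ⟨⟨hzU, fun hzS => hzST (.inl hzS)⟩, mem_iInter₂.2 fun W hW => ?_⟩))
  obtain ⟨w, hwW, hwST, hwz⟩ := hx W hW
  exact ⟨w, ⟨hwW, fun hwS => hwST (.inl hwS)⟩, hwz⟩

theorem exists_splits (hp : Continuous p) (hε : ε ≠ 0) {U : Set Z} {𝒬 : Set (Set Z)}
    (hU : IsOpen U) (h𝒬 : 𝒬.Countable) (h𝒬o : ∀ W ∈ 𝒬, IsOpen W)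
    (h : HasLargeFiber p (insert U 𝒬)) :
    ∃ V, Splits ε U V ∧ HasLargeFiber p (range V ∪ 𝒬) := by
  by_contra! hcon
  let ι := {V : Bool → countableBasis Z // Splits ε U fun b => V b}
  have : ∀ V : ι, ∃ S, SigmaInjOn p S ∧
      ∀ x, ∃ W ∈ range (fun b => (V.1 b : Set Z)) ∪ 𝒬, ∀ z ∈ W, z ∉ S → p z ≠ x := fun V => by
    simpa only [HasLargeFiber, not_forall, not_exists, not_and, exists_prop] using hcon _ V.2
  choose S hS hSx using this
  obtain ⟨S', hSS', hS'm, hS'⟩ := (SigmaInjOn.iUnion hS).exists_measurableSet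
  refine h.not_injOn hp hU h𝒬 h𝒬o hS' hS'm ?_
  rintro z ⟨⟨hzU, hzS⟩, hzP⟩ w ⟨⟨hwU, hwS⟩, -⟩ hpzw
  by_contra hzw
  obtain ⟨V, hV, hzV, hwV⟩ :=
    exists_splits_of_ne (isBasis_countableBasis Z) hε hU hzU hwU hzw
  have hsub : S ⟨V, hV⟩ ⊆ S' := (subset_iUnion S ⟨V, hV⟩).trans hSS'
  obtain ⟨W, ⟨b, rfl⟩ | hW, hWz⟩ := hSx ⟨V, hV⟩ (p z)
  · cases b
    · exact hWz z hzV (fun hz => hzS (hsub hz)) rfl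
    · exact hWz w hwV (fun hw => hwS (hsub hw)) hpzw.symm
  · obtain ⟨y, ⟨hyW, hyS⟩, hyz⟩ := mem_iInter₂.1 hzP W (mem_insert_of_mem _ hW)
    exact hWz y hyW (fun hy => hyS (hsub hy)) hyz

theorem exists_splits_finset (hp : Continuous p) (hε : ε ≠ 0) {ι : Type*} {U : ι → Set Z}
    (I : Finset ι) (hU : ∀ i ∈ I, IsOpen (U i)) {𝒬 : Set (Set Z)} (h𝒬 : 𝒬.Countable)
    (h𝒬o : ∀ W ∈ 𝒬, IsOpen W) (h : HasLargeFiber p (U '' I ∪ 𝒬)) :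
    ∃ V : ι → Bool → Set Z, (∀ i ∈ I, Splits ε (U i) (V i)) ∧
      HasLargeFiber p ((⋃ i ∈ I, range (V i)) ∪ 𝒬) := by
  classical
  induction I using Finset.induction_on generalizing 𝒬 with
  | empty => exact ⟨fun _ _ => ∅, by simp, by simpa using h⟩
  | insert i I hi ih =>
    rw [Finset.forall_mem_insert] at hU
    rw [Finset.coe_insert, image_insert_eq, insert_union] at h
    obtain ⟨V, hV, hlarge⟩ := h.exists_splits hp hε hU.1
      ((I.countable_toSet.image U).union h𝒬)
      (union_subset_iff.2 ⟨image_subset_iff.2 hU.2, h𝒬o⟩)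
    rw [← union_assoc, union_comm (range V), union_assoc] at hlarge
    obtain ⟨W, hW, hlarge⟩ := ih hU.2 ((countable_range V).union h𝒬)
      (union_subset_iff.2 ⟨range_subset_iff.2 hV.isOpen, h𝒬o⟩) hlarge
    have hupd : ∀ j ∈ I, Function.update W i V j = W j := fun j hj =>
      Function.update_of_ne (ne_of_mem_of_not_mem hj hi) _ _
    refine ⟨Function.update W i V, Finset.forall_mem_insert _ _ _ |>.2 ⟨?_, fun j hj => ?_⟩, ?_⟩
    · rwa [Function.update_self]
    · rw [hupd j hj]
      exact hW j hj
    · rw [Finset.set_biUnion_insert, Function.update_self,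
        iUnion₂_congr fun j hj => congrArg range (hupd j hj), union_comm (range V), union_assoc]
      exact hlarge

theorem exists_next_level (hp : Continuous p) (hε : ε ≠ 0) {n : ℕ} {U : List Bool → Set Z}
    (hU : ∀ s, s.length = n → IsOpen (U s)) (h : HasLargeFiber p (U '' {s | s.length = n})) :
    ∃ V : List Bool → Set Z, (∀ s, s.length = n → Splits ε (U s) fun b => V (b :: s)) ∧
      HasLargeFiber p (V '' {s | s.length = n + 1}) := by
  have hfin : {s : List Bool | s.length = n}.Finite := List.finite_length_eq Bool n
  obtain ⟨V, hV, hlarge⟩ := exists_splits_finset (U := U) hp hε hfin.toFinset (by simpa using hU)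
    countable_empty (by simp) (by simpa using h)
  refine ⟨fun | [] => ∅ | b :: s => V s b, fun s hs => hV s (by simpa using hs), hlarge.mono ?_⟩
  rintro _ ⟨_ | ⟨b, s⟩, hs, rfl⟩
  · simp at hs
  · exact .inl (mem_biUnion (by simpa using hs) (mem_range_self b))

theorem exists_scheme (hp : Continuous p) {ε : ℕ → ℝ≥0∞} (hε : ∀ n, ε n ≠ 0)
    (h : HasLargeFiber p {univ}) :
    ∃ D : List Bool → Set Z, (∀ s, Splits (ε s.length) (D s) fun b => D (b :: s)) ∧
      ∀ n, HasLargeFiber p (D '' {s | s.length = n}) := by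
  let Level (n : ℕ) (U : List Bool → Set Z) : Prop :=
    (∀ s, s.length = n → IsOpen (U s)) ∧ HasLargeFiber p (U '' {s | s.length = n})
  have next : ∀ n (U : {U // Level n U}), ∃ V : {V // Level (n + 1) V},
      ∀ s, s.length = n → Splits (ε n) (U.1 s) fun b => V.1 (b :: s) := by
    rintro n ⟨U, hUo, hU⟩
    obtain ⟨V, hV, hlarge⟩ := hU.exists_next_level hp (hε n) hUo
    refine ⟨⟨V, fun s hs => ?_, hlarge⟩, hV⟩
    obtain ⟨b, s, rfl⟩ := List.exists_cons_of_length_eq_add_one hs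
    exact (hV s (by simpa using hs)).isOpen b
  choose step hstep using next
  let U : (n : ℕ) → {U // Level n U} := fun n => Nat.rec
    ⟨fun _ => univ, fun _ _ => isOpen_univ, h.mono (image_subset_iff.2 fun _ _ => rfl)⟩ step n
  refine ⟨fun s => (U s.length).1 s, fun s => hstep _ (U s.length) s rfl, fun n => ?_⟩
  refine (U n).2.2.mono ?_
  rintro _ ⟨s, rfl, rfl⟩
  exact mem_image_of_mem _ rfl

end HasLargeFiber

theorem not_countable_cantor : ¬Countable (ℕ → Bool) := by
  intro h
  classical
  obtain ⟨f, hf⟩ := h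
  refine Function.cantor_injective (fun s : Set ℕ => f fun n => decide (n ∈ s)) fun s t hst => ?_
  simpa only [funext_iff, decide_eq_decide, ← Set.ext_iff] using hf hst

theorem exists_injective_map_eq_of_scheme [MetricSpace Z] [CompleteSpace Z]
    [TopologicalSpace X] [T2Space X] {p : Z → X} (hp : Continuous p) {D : List Bool → Set Z}
    (hsplit : ∀ s, Splits (s.length : ℝ≥0∞)⁻¹ (D s) fun b => D (b :: s))
    (hfib : ∀ n, ∃ x, ∀ s, s.length = n → ∃ z ∈ D s, p z = x) :
    ∃ f : (ℕ → Bool) → Z, Function.Injective f ∧ ∀ α β, p (f α) = p (f β) := by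
  have hdiam : ∀ α, Tendsto (fun n => Metric.ediam (D (res α n))) atTop (𝓝 0) := by
    intro α
    refine (tendsto_add_atTop_iff_nat 1).1 (tendsto_of_tendsto_of_tendsto_of_le_of_le
      tendsto_const_nhds ENNReal.tendsto_inv_nat_nhds_zero (fun _ => zero_le) fun n => ?_)
    simpa only [res_succ, res_length] using (hsplit (res α n)).ediam_le (α n)
  have hdisj : CantorScheme.Disjoint D := by
    rintro s (_ | _) (_ | _) hab
    exacts [(hab rfl).elim, (hsplit s).disjoint, (hsplit s).disjoint.symm, (hab rfl).elim]
  have htotal : (CantorScheme.inducedMap D).1 = univ := by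
    refine CantorScheme.ClosureAntitone.map_of_vanishingDiam hdiam
      (fun s b => (hsplit s).closure_subset b) fun s => ?_
    obtain ⟨x, hx⟩ := hfib s.length
    exact (hx s rfl).imp fun _ => And.left
  let f : (ℕ → Bool) → Z := fun α => (CantorScheme.inducedMap D).2 ⟨α, htotal ▸ trivial⟩
  have hf : ∀ α n, f α ∈ D (res α n) := fun α n => CantorScheme.map_mem _ n
  choose x z hzD hpz using hfib
  have hlim : ∀ α, Tendsto x atTop (𝓝 (p (f α))) := by
    intro α
    have hz : Tendsto (fun n => z n (res α n) (res_length α n)) atTop (𝓝 (f α)) :=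
      tendsto_iff_edist_tendsto_0.2 <| tendsto_of_tendsto_of_tendsto_of_le_of_le
        tendsto_const_nhds (hdiam α) (fun _ => zero_le)
        fun n => Metric.edist_le_ediam_of_mem (hzD n _ _) (hf α n)
    exact ((hp.tendsto _).comp hz).congr fun n => hpz n _ _
  exact ⟨f, fun α β hαβ => congrArg Subtype.val (hdisj.map_injective hαβ),
    fun α β => tendsto_nhds_unique (hlim α) (hlim β)⟩

theorem sigmaInjOn_univ_of_continuous [TopologicalSpace Z] [PolishSpace Z] [MeasurableSpace Z]
    [BorelSpace Z] [TopologicalSpace X] [PolishSpace X] [MeasurableSpace X] [BorelSpace X]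
    {p : Z → X} (hp : Continuous p) (hcount : ∀ x, (p ⁻¹' {x}).Countable) :
    SigmaInjOn p univ := by
  let := upgradeIsCompletelyMetrizable Z
  by_contra hbig
  have hlarge : HasLargeFiber p {univ} := by
    intro S hS
    obtain ⟨z, hz⟩ : ∃ z, z ∉ S := by
      by_contra! hSuniv
      exact hbig (hS.mono fun z _ => hSuniv z)
    exact ⟨p z, fun U hU => ⟨z, by simp_all, hz, rfl⟩⟩
  obtain ⟨D, hsplit, hD⟩ := hlarge.exists_scheme hp (ε := fun n => (n : ℝ≥0∞)⁻¹)
    fun n => ENNReal.inv_ne_zero.2 (natCast_ne_top n)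
  have hfib : ∀ n, ∃ x, ∀ s : List Bool, s.length = n → ∃ z ∈ D s, p z = x := fun n =>
    (hD n ∅ .empty).imp fun x hx s hs =>
      (hx (D s) (mem_image_of_mem D hs)).imp fun z hz => ⟨hz.1, hz.2.2⟩
  obtain ⟨f, hf, hpf⟩ := exists_injective_map_eq_of_scheme hp hsplit hfib
  have hrange : (range f).Countable :=
    (hcount (p (f default))).mono (range_subset_iff.2 fun α => hpf α default)
  exact not_countable_cantor ((Equiv.ofInjective f hf).countable_iff.2 hrange.to_subtype)

theorem sigmaInjOn_univ_of_countable_fibers [MeasurableSpace Z] [StandardBorelSpace Z]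
    [MeasurableSpace X] [StandardBorelSpace X] {p : Z → X} (hp : Measurable p)
    (hcount : ∀ x, (p ⁻¹' {x}).Countable) : SigmaInjOn p univ := by
  let := upgradeStandardBorel X
  let τ := upgradeStandardBorel Z
  obtain ⟨τ', hle, hcont, hpolish⟩ := hp.exists_continuous
  let := τ'
  have : BorelSpace Z := ⟨by
    rw [borel_eq_borel_of_le hpolish τ.toPolishSpace hle]
    exact τ.toBorelSpace.measurable_eq⟩
  exact sigmaInjOn_univ_of_continuous hcont hcount

end LusinNovikov

section FeldmanMoore

variable [MeasurableSpace X] {E : X → X → Prop} {T : ℕ → X ≃ᵐ X}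

theorem measurable_of_measurableSet_graph [StandardBorelSpace X] {Y : Type*} [MeasurableSpace Y]
    [StandardBorelSpace Y] {f : X → Y} {G : Set (X × Y)} (hG : MeasurableSet G)
    (hf : ∀ x y, (x, y) ∈ G ↔ f x = y) : Measurable f := by
  intro C hC
  have himage : f ⁻¹' C = Prod.fst '' (G ∩ Prod.snd ⁻¹' C) := by
    ext x
    simp [hf]
  rw [himage]
  refine (hG.inter (measurable_snd hC)).image_of_measurable_injOn measurable_fst ?_
  rintro ⟨x, y⟩ ⟨hxy, -⟩ ⟨x', y'⟩ ⟨hxy', -⟩ (rfl : x = x')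
  rw [← (hf _ _).1 hxy, ← (hf _ _).1 hxy']

theorem exists_involutive_measurableEquiv [StandardBorelSpace X] {R : Set (X × X)}
    (hR : MeasurableSet R) (hsymm : ∀ x y, (x, y) ∈ R → (y, x) ∈ R) (hinj : InjOn Prod.fst R) :
    ∃ T : X ≃ᵐ X, Function.Involutive T ∧ (∀ x y, (x, y) ∈ R → T x = y) ∧
      ∀ x, T x = x ∨ (x, T x) ∈ R := by
  -- Complete `R` to the graph of a total involution by the diagonal off its domain.
  let G : Set (X × X) := R ∪ {q | q.1 = q.2 ∧ q.1 ∉ Prod.fst '' R}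
  have hG : MeasurableSet G :=
    hR.union <| (measurableSet_eq_fun measurable_fst measurable_snd).inter
      (measurable_fst (hR.image_of_measurable_injOn measurable_fst hinj)).compl
  have hGsymm : ∀ x y, (x, y) ∈ G → (y, x) ∈ G := by
    rintro x y (hxy | ⟨rfl : x = y, hx⟩)
    exacts [.inl (hsymm x y hxy), .inr ⟨rfl, hx⟩]
  have hGunique : ∀ x y z, (x, y) ∈ G → (x, z) ∈ G → y = z := by
    rintro x y z (hxy | ⟨rfl : x = y, hx⟩) (hxz | ⟨rfl : x = z, hx'⟩)
    exacts [congrArg Prod.snd (hinj hxy hxz rfl), (hx' ⟨_, hxy, rfl⟩).elim,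
      (hx ⟨_, hxz, rfl⟩).elim, rfl]
  have hGtotal : ∀ x, ∃ y, (x, y) ∈ G := by
    intro x
    by_cases hx : x ∈ Prod.fst '' R
    · obtain ⟨⟨x, y⟩, hxy, rfl⟩ := hx
      exact ⟨y, .inl hxy⟩
    · exact ⟨x, .inr ⟨rfl, hx⟩⟩
  choose t ht using hGtotal
  have htG : ∀ x y, (x, y) ∈ G ↔ t x = y := fun x y =>
    ⟨fun hxy => hGunique x _ _ (ht x) hxy, fun hxy => hxy ▸ ht x⟩
  have hinvol : Function.Involutive t := fun x => (htG _ _).1 (hGsymm _ _ (ht x))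
  have hmeas : Measurable t := measurable_of_measurableSet_graph hG htG
  refine ⟨⟨hinvol.toPerm, hmeas, hmeas⟩, hinvol, fun x y hxy => (htG x y).1 (.inl hxy), fun x => ?_⟩
  exact (ht x).symm.imp (fun h => h.1.symm) id

/-- A sequence of Borel involutions whose graphs cover exactly `E`, as provided by the
Feldman–Moore theorem. -/
structure IsFeldmanMoore (E : X → X → Prop) (T : ℕ → X ≃ᵐ X) : Prop where
  involutive : ∀ k, Function.Involutive (T k)
  rel_iff : ∀ x y, E x y ↔ ∃ k, T k x = y

theorem IsCBER.exists_iUnion_eq_injOn_fst [StandardBorelSpace X] (hE : IsCBER E) :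
    ∃ G : ℕ → Set (X × X), (∀ n, MeasurableSet (G n) ∧ InjOn Prod.fst (G n)) ∧
      {q | E q.1 q.2} = ⋃ n, G n := by
  have : StandardBorelSpace {q : X × X | E q.1 q.2} := hE.2.1.standardBorel
  have hfst : Measurable fun q : {q : X × X | E q.1 q.2} => q.1.1 :=
    measurable_fst.comp measurable_subtype_coe
  obtain ⟨A, hA, hcover⟩ := sigmaInjOn_univ_of_countable_fibers hfst fun x => by
    refine MapsTo.countable_of_injOn (f := fun q => q.1.2) (t := {y | E x y}) ?_ ?_ (hE.2.2 x)
    · rintro ⟨q, hq⟩ rfl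
      exact hq
    · rintro q rfl r hr hqr
      exact Subtype.ext (Prod.ext hr.symm hqr)
  refine ⟨fun n => Subtype.val '' A n, fun n => ⟨hE.2.1.subtype_image (hA n).1, ?_⟩, ?_⟩
  · exact ((hA n).2.image_of_comp :)
  · rw [← image_iUnion, univ_subset_iff.1 hcover, image_univ, Subtype.range_coe]

theorem IsCBER.exists_iUnion_eq_symmetric_injOn_fst [StandardBorelSpace X] (hE : IsCBER E) :
    ∃ R : ℕ × ℕ × ℕ → Set (X × X), (∀ i, MeasurableSet (R i)) ∧
      (∀ i x y, (x, y) ∈ R i → (y, x) ∈ R i) ∧ (∀ i, InjOn Prod.fst (R i)) ∧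
      ∀ x y, (E x y ∧ x ≠ y) ↔ ∃ i, (x, y) ∈ R i := by
  obtain ⟨G, hG, hEG⟩ := hE.exists_iUnion_eq_injOn_fst
  obtain ⟨S, hS, hsep⟩ :=
    exists_seq_separating X (p := MeasurableSet) MeasurableSet.empty univ
  have hGE : ∀ {x y}, E x y ↔ ∃ n, (x, y) ∈ G n := fun {x y} =>
    (Set.ext_iff.1 hEG (x, y)).trans mem_iUnion
  -- A pair in `R n m k` goes from `S k` to its complement, so the union of `R n m k` with its
  -- inverse is still the graph of a partial function.
  let R (i : ℕ × ℕ × ℕ) : Set (X × X) :=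
    (G i.1 ∩ Prod.swap ⁻¹' G i.2.1) ∩ S i.2.2 ×ˢ (S i.2.2)ᶜ
  have hR : ∀ i, MeasurableSet (R i) := fun i =>
    ((hG _).1.inter (measurable_swap (hG _).1)).inter ((hS _).prod (hS _).compl)
  refine ⟨fun i => R i ∪ Prod.swap ⁻¹' R i, fun i => (hR i).union (measurable_swap (hR i)),
    fun _ _ _ => Or.symm, ?_, fun x y => ⟨fun ⟨hxy, hne⟩ => ?_, ?_⟩⟩
  · rintro i ⟨x, y⟩ (hy | hy) ⟨x', z⟩ (hz | hz) (rfl : x = x')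
    · exact (hG _).2 hy.1.1 hz.1.1 rfl
    · exact (hz.2.2 hy.2.1).elim
    · exact (hy.2.2 hz.2.1).elim
    · exact (hG _).2 hy.1.2 hz.1.2 rfl
  · obtain ⟨n, hn⟩ := hGE.1 hxy
    obtain ⟨m, hm⟩ := hGE.1 (hE.1.symm hxy)
    obtain ⟨k, hk⟩ : ∃ k, ¬(x ∈ S k ↔ y ∈ S k) := by
      contrapose! hne
      exact hsep x trivial y trivial hne
    by_cases hx : x ∈ S k
    · exact ⟨(n, m, k), .inl ⟨⟨hn, hm⟩, hx, fun hy => hk (iff_of_true hx hy)⟩⟩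
    · exact ⟨(m, n, k), .inr ⟨⟨hm, hn⟩, by_contra fun hy => hk (iff_of_false hx hy), hx⟩⟩
  · rintro ⟨i, ⟨⟨hxy, -⟩, hx, hy⟩ | ⟨⟨-, hxy⟩, hy, hx⟩⟩
    exacts [⟨hGE.2 ⟨_, hxy⟩, ne_of_mem_of_not_mem hx hy⟩,
      ⟨hGE.2 ⟨_, hxy⟩, (ne_of_mem_of_not_mem hy hx).symm⟩]

theorem IsCBER.exists_isFeldmanMoore [StandardBorelSpace X] (hE : IsCBER E) :
    ∃ T, IsFeldmanMoore E T := by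
  obtain ⟨R, hR, hsymm, hinj, hER⟩ := hE.exists_iUnion_eq_symmetric_injOn_fst
  choose T hinvol hRT hTR using fun i =>
    exists_involutive_measurableEquiv (hR i) (hsymm i) (hinj i)
  obtain ⟨T', hT'⟩ := ((countable_range T).insert (.refl X)).exists_eq_range (insert_nonempty _ _)
  refine ⟨T', ?_, fun x y => ?_⟩
  · rw [← forall_mem_range (p := fun t : X ≃ᵐ X => Function.Involutive t), ← hT', forall_mem_insert,
      forall_mem_range]
    exact ⟨fun _ => rfl, hinvol⟩
  · rw [← exists_range_iff (p := fun t : X ≃ᵐ X => t x = y), ← hT', exists_mem_insert,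
      exists_range_iff]
    constructor
    · intro hxy
      refine (eq_or_ne x y).imp_right fun hne => ?_
      obtain ⟨i, hi⟩ := (hER x y).1 ⟨hxy, hne⟩
      exact ⟨i, hRT i x y hi⟩
    · rintro (rfl | ⟨i, rfl⟩)
      · exact hE.1.refl x
      · obtain hx | hx := hTR i x
        exacts [hx.symm ▸ hE.1.refl x, ((hER _ _).2 ⟨i, hx⟩).1]

/-- The points `x` at which `k` is the first index to reach `T k x`; this makes sums over
`E`-classes into sums over `ℕ` without repetition. -/
def firstSet (T : ℕ → X ≃ᵐ X) (k : ℕ) : Set X := {x | ∀ j < k, T j x ≠ T k x}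

theorem measurableSet_firstSet [StandardBorelSpace X] (T : ℕ → X ≃ᵐ X) (k : ℕ) :
    MeasurableSet (firstSet T k) := by
  have hInter : firstSet T k = ⋂ j, ⋂ (_ : j < k), {x | T j x = T k x}ᶜ := by
    ext x
    simp [firstSet]
  rw [hInter]
  exact .iInter fun j => .iInter fun _ =>
    (measurableSet_eq_fun (T j).measurable (T k).measurable).compl

namespace IsFeldmanMoore

theorem apply_mem_firstSet (hT : IsFeldmanMoore E T) {k : ℕ} {x : X} :
    T k x ∈ firstSet T k ↔ x ∈ firstSet T k := by
  have of_mem : ∀ {x}, x ∈ firstSet T k → T k x ∈ firstSet T k := fun {x} hx j hj hjx =>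
    hx j hj ((hT.involutive j).eq_iff.1 (hjx.trans (hT.involutive k x))).symm
  exact ⟨fun hx => hT.involutive k x ▸ of_mem hx, of_mem⟩

theorem tsum_eq (hT : IsFeldmanMoore E T) {h : X → X → ℝ≥0∞} (hh : ∀ x y, ¬E x y → h x y = 0)
    (x : X) : ∑' y, h x y = ∑' k, (firstSet T k).indicator (fun x => h x (T k x)) x := by
  classical
  have hinj : Function.Injective fun k : {k | x ∈ firstSet T k} => T k x := by
    rintro ⟨k, hk⟩ ⟨l, hl⟩ hkl
    obtain h | h | h := lt_trichotomy k l
    exacts [(hl k h hkl).elim, Subtype.ext h, (hk l h hkl.symm).elim]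
  have hsupp : Function.support (h x) ⊆ range fun k : {k | x ∈ firstSet T k} => T k x := by
    intro y hy
    have hex := (hT.rel_iff x y).1 (by_contra fun hxy => hy (hh x y hxy))
    exact ⟨⟨Nat.find hex, fun j hj hjx =>
      Nat.find_min hex hj (hjx.trans (Nat.find_spec hex))⟩, Nat.find_spec hex⟩
  rw [← hinj.tsum_eq hsupp, tsum_subtype {k | x ∈ firstSet T k} fun k => h x (T k x)]
  rfl

end IsFeldmanMoore

end FeldmanMoore

theorem encard_eq_tsum_indicator (s : Set X) :
    (s.encard : ℝ≥0∞) = ∑' y, s.indicator 1 y := by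
  rw [← ENNReal.tsum_set_one, tsum_subtype s fun _ => (1 : ℝ≥0∞)]
  rfl

section MassTransport

variable [MeasurableSpace X] {E : X → X → Prop} {σ : Measure X} {h : X → X → ℝ≥0∞}

theorem IsInvariant.map_withDensity {ρ : X → X → ℝ} (hσ : IsInvariant E ρ σ) {T : X ≃ᵐ X}
    (hT : ∀ x, E (T x) x) : (σ.withDensity fun x => ENNReal.ofReal (ρ (T x) x)).map T = σ := by
  ext B hB
  rw [Measure.map_apply T.measurable hB, withDensity_apply _ (T.measurable hB),
    ← hσ T hT _ (T.measurable hB), image_preimage_eq B T.surjective]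

theorem IsInvariant.measurePreserving (hσ : IsInvariant E (fun _ _ => 1) σ) {T : X ≃ᵐ X}
    (hT : ∀ x, E (T x) x) : MeasurePreserving T σ σ :=
  ⟨T.measurable, by simpa using hσ.map_withDensity hT⟩

variable [StandardBorelSpace X]

theorem IsCBER.measurable_tsum (hE : IsCBER E) (hm : Measurable (Function.uncurry h))
    (hh : ∀ x y, ¬E x y → h x y = 0) : Measurable fun x => ∑' y, h x y := by
  obtain ⟨T, hT⟩ := hE.exists_isFeldmanMoore
  simp only [hT.tsum_eq hh]
  exact .tsum fun k =>
    (hm.comp (measurable_id.prodMk (T k).measurable)).indicator (measurableSet_firstSet T k)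

theorem IsInvariant.lintegral_tsum_comm (hE : IsCBER E) (hσ : IsInvariant E (fun _ _ => 1) σ)
    (hm : Measurable (Function.uncurry h)) (hh : ∀ x y, ¬E x y → h x y = 0) :
    ∫⁻ x, ∑' y, h x y ∂σ = ∫⁻ x, ∑' y, h y x ∂σ := by
  obtain ⟨T, hT⟩ := hE.exists_isFeldmanMoore
  have hmeas : ∀ {g : X → X → ℝ≥0∞}, Measurable (Function.uncurry g) → ∀ k,
      Measurable ((firstSet T k).indicator fun x => g x (T k x)) := fun hg k =>
    (hg.comp (measurable_id.prodMk (T k).measurable)).indicator (measurableSet_firstSet T k)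
  have hm' : Measurable (Function.uncurry fun x y => h y x) := hm.comp measurable_swap
  have hh' : ∀ x y, ¬E x y → h y x = 0 := fun x y hxy => hh y x fun hyx => hxy (hE.1.symm hyx)
  simp only [hT.tsum_eq hh, hT.tsum_eq hh']
  rw [lintegral_tsum fun k => (hmeas hm k).aemeasurable,
    lintegral_tsum fun k => (hmeas hm' k).aemeasurable]
  refine tsum_congr fun k => ?_
  have hTk : MeasurePreserving (T k) σ σ :=
    hσ.measurePreserving fun x => hE.1.symm ((hT.rel_iff _ _).2 ⟨k, rfl⟩)
  rw [← hTk.lintegral_comp (hmeas hm k)]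
  refine lintegral_congr fun x => ?_
  classical
  simp only [indicator_apply, hT.apply_mem_firstSet, hT.involutive k x]

theorem IsInvariant.lintegral_tsum_fiber (hE : IsCBER E) (hσ : IsInvariant E (fun _ _ => 1) σ)
    {r : X → X} (hr : Measurable r) (hEr : ∀ x, E x (r x)) {u : X → ℝ≥0∞} (hu : Measurable u) :
    ∫⁻ y, ∑' x : r ⁻¹' {y}, u x ∂σ = ∫⁻ x, u x ∂σ := by
  classical
  have hsum : ∀ y, ∑' x : r ⁻¹' {y}, u x = ∑' x, if r x = y then u x else 0 := fun y => by
    simp only [tsum_subtype, indicator_apply, mem_preimage, mem_singleton_iff]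
  simp only [hsum]
  rw [← hσ.lintegral_tsum_comm hE (h := fun x y => if r x = y then u x else 0)]
  · simp only [tsum_ite_eq']
  · exact .ite (measurableSet_eq_fun (hr.comp measurable_fst) measurable_snd)
      (hu.comp measurable_fst) measurable_const
  · exact fun x y hxy => if_neg fun hry : r x = y => hxy (hry ▸ hEr x)

theorem IsInvariant.lintegral_encard_fiber (hE : IsCBER E) (hσ : IsInvariant E (fun _ _ => 1) σ)
    {r : X → X} (hr : Measurable r) (hEr : ∀ x, E x (r x)) :
    ∫⁻ x, ((r ⁻¹' {x}).encard : ℝ≥0∞) ∂σ = σ univ := by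
  simp only [← ENNReal.tsum_set_one, ← lintegral_one]
  exact hσ.lintegral_tsum_fiber hE hr hEr measurable_const

theorem IsInvariant.ae_forall (hE : IsCBER E) (hσ : IsInvariant E (fun _ _ => 1) σ)
    {q : X → Prop} (hq : ∀ᵐ x ∂σ, q x) : ∀ᵐ x ∂σ, ∀ y, E x y → q y := by
  obtain ⟨T, hT⟩ := hE.exists_isFeldmanMoore
  have hTq : ∀ᵐ x ∂σ, ∀ k, q (T k x) := ae_all_iff.2 fun k =>
    (hσ.measurePreserving fun x =>
      hE.1.symm ((hT.rel_iff _ _).2 ⟨k, rfl⟩)).quasiMeasurePreserving.ae hq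
  filter_upwards [hTq] with x hx y hxy
  obtain ⟨k, rfl⟩ := (hT.rel_iff x y).1 hxy
  exact hx k

end MassTransport

theorem IsFinSubequiv.isCBER [MeasurableSpace X] {E F : X → X → Prop} (hF : IsFinSubequiv E F) :
    IsCBER F :=
  ⟨hF.1, hF.2.1, fun x => (hF.2.2.2 x).countable⟩

section Encard

variable [MeasurableSpace X] [StandardBorelSpace X] {E : X → X → Prop} {A : Set (X × X)}

theorem IsCBER.measurable_encard (hE : IsCBER E) (hA : MeasurableSet A)
    (hAE : ∀ x y, (x, y) ∈ A → E x y) :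
    Measurable fun x => ({y | (x, y) ∈ A}.encard : ℝ≥0∞) := by
  simp only [encard_eq_tsum_indicator]
  exact hE.measurable_tsum (h := fun x y => A.indicator 1 (x, y)) (measurable_one.indicator hA)
    fun x y hxy => indicator_of_notMem (fun hA => hxy (hAE x y hA)) _

theorem IsCBER.measurableSet_infinite (hE : IsCBER E) (hA : MeasurableSet A)
    (hAE : ∀ x y, (x, y) ∈ A → E x y) : MeasurableSet {x | {y | (x, y) ∈ A}.Infinite} := by
  simp only [← encard_eq_top_iff, ← ENat.toENNReal_eq_top]
  exact hE.measurable_encard hA hAE (measurableSet_singleton ∞)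

theorem IsCBER.measurableSet_exists (hE : IsCBER E) (hA : MeasurableSet A)
    (hAE : ∀ x y, (x, y) ∈ A → E x y) : MeasurableSet {x | ∃ y, (x, y) ∈ A} := by
  have hne : {x | ∃ y, (x, y) ∈ A} = {x | ({y | (x, y) ∈ A}.encard : ℝ≥0∞) ≠ 0} := by
    ext x
    simp only [mem_ofPred_eq, ne_eq, ENat.toENNReal_eq_zero, encard_ne_zero, Set.Nonempty]
  rw [hne]
  exact (hE.measurable_encard hA hAE (measurableSet_singleton 0)).compl

theorem IsCBER.exists_measurable_retraction (hE : IsCBER E) {B : Set X} (hB : MeasurableSet B)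
    (hmeet : ∀ x, ∃ y, E x y ∧ y ∈ B) : ∃ r : X → X, Measurable r ∧ ∀ x, E x (r x) ∧ r x ∈ B := by
  classical
  obtain ⟨T, hT⟩ := hE.exists_isFeldmanMoore
  have hex : ∀ x, ∃ k, T k x ∈ B := fun x => by
    obtain ⟨y, hxy, hy⟩ := hmeet x
    obtain ⟨k, rfl⟩ := (hT.rel_iff x y).1 hxy
    exact ⟨k, hy⟩
  exact ⟨fun x => T (Nat.find (hex x)) x,
    .find (fun k => (T k).measurable) (fun k => (T k).measurable hB) hex,
    fun x => ⟨(hT.rel_iff _ _).2 ⟨_, rfl⟩, Nat.find_spec (hex x)⟩⟩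

theorem IsFinSubequiv.exists_measurable_selector {E F : X → X → Prop} (hF : IsFinSubequiv E F) :
    ∃ s : X → X, Measurable s ∧ (∀ x, F x (s x)) ∧ ∀ x y, F x y → s x = s y := by
  let c := embeddingReal X
  have hc : MeasurableEmbedding c := measurableEmbedding_embeddingReal X
  let B : Set X := {x | ∃ y, (x, y) ∈ {q : X × X | F q.1 q.2 ∧ c q.2 < c q.1}}ᶜ
  have hB : MeasurableSet B := by
    refine (hF.isCBER.measurableSet_exists (hF.2.1.inter ?_) fun _ _ => And.left).compl
    exact measurableSet_lt (hc.measurable.comp measurable_snd) (hc.measurable.comp measurable_fst)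
  have hle : ∀ {x y}, x ∈ B → F x y → c x ≤ c y := fun hx hxy =>
    le_of_not_gt fun hlt => hx ⟨_, hxy, hlt⟩
  have hmeet : ∀ x, ∃ y, F x y ∧ y ∈ B := fun x => by
    obtain ⟨y, hxy, hy⟩ := exists_min_image _ c (hF.2.2.2 x) ⟨x, hF.1.refl x⟩
    exact ⟨y, hxy, fun ⟨z, hyz, hlt⟩ => hlt.not_ge (hy z (hF.1.trans hxy hyz))⟩
  obtain ⟨s, hs, hFs⟩ := hF.isCBER.exists_measurable_retraction hB hmeet
  refine ⟨s, hs, fun x => (hFs x).1, fun x y hxy => hc.injective (le_antisymm ?_ ?_)⟩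
  · exact hle (hFs x).2 (hF.1.trans (hF.1.symm (hFs x).1) (hF.1.trans hxy (hFs y).1))
  · exact hle (hFs y).2 (hF.1.trans (hF.1.symm (hFs y).1) (hF.1.trans (hF.1.symm hxy) (hFs x).1))

end Encard

section Density

variable [MeasurableSpace X] [StandardBorelSpace X] {E : X → X → Prop}

theorem IsCBER.exists_infinite_subset_of_separated (hE : IsCBER E) {B S : Set X}
    (hB : MeasurableSet B) (hBinf : ∀ x, {y | E x y ∧ y ∈ B}.Infinite) (hS : MeasurableSet S) :
    ∃ C ⊆ B, MeasurableSet C ∧ (∀ x, {y | E x y ∧ y ∈ C}.Infinite) ∧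
      ∀ x ∈ C, ∀ y ∈ C, E x y → (x ∈ S ↔ y ∈ S) := by
  let I : Set X := {x | {y | E x y ∧ y ∈ B ∩ S}.Infinite}
  have hI : MeasurableSet I := hE.measurableSet_infinite
    (A := {q | E q.1 q.2 ∧ q.2 ∈ B ∩ S}) (hE.2.1.inter (measurable_snd (hB.inter hS)))
    fun _ _ => And.left
  have hIE : ∀ {x y}, E x y → (x ∈ I ↔ y ∈ I) := fun {x y} hxy => by
    have hiff : ∀ z, E x z ↔ E y z := fun z => ⟨hE.1.trans (hE.1.symm hxy), hE.1.trans hxy⟩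
    simp only [I, mem_ofPred_eq, hiff]
  refine ⟨B ∩ {x | x ∈ S ↔ x ∈ I}, inter_subset_left, hB.inter (hS.iff hI), fun x => ?_, ?_⟩
  · by_cases hx : x ∈ I
    · refine Infinite.mono ?_ hx
      rintro y ⟨hxy, hyB, hyS⟩
      exact ⟨hxy, hyB, iff_of_true hyS ((hIE hxy).1 hx)⟩
    · refine ((hBinf x).sdiff (not_infinite.1 hx)).mono ?_
      rintro y ⟨⟨hxy, hyB⟩, hyS⟩
      exact ⟨hxy, hyB, iff_of_false (fun hy => hyS ⟨hxy, hyB, hy⟩) fun hy => hx ((hIE hxy).2 hy)⟩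
  · rintro x ⟨-, hx : x ∈ S ↔ x ∈ I⟩ y ⟨-, hy : y ∈ S ↔ y ∈ I⟩ hxy
    rw [hx, hy, hIE hxy]

theorem IsCBER.exists_vanishing_markers (hE : IsCBER E) (haper : ∀ x, {y | E x y}.Infinite) :
    ∃ B : ℕ → Set X, (∀ n, MeasurableSet (B n)) ∧ Antitone B ∧ (⋂ n, B n) = ∅ ∧
      ∀ n x, ∃ y, E x y ∧ y ∈ B n := by
  obtain ⟨S, hS, hsep⟩ :=
    exists_seq_separating X (p := MeasurableSet) MeasurableSet.empty univ
  let Infinitary := {B : Set X // MeasurableSet B ∧ ∀ x, {y | E x y ∧ y ∈ B}.Infinite}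
  have next : ∀ n (B : Infinitary), ∃ C : Infinitary, C.1 ⊆ B.1 ∧
      ∀ x ∈ C.1, ∀ y ∈ C.1, E x y → (x ∈ S n ↔ y ∈ S n) := fun n B => by
    obtain ⟨C, hCB, hC, hCinf, hCS⟩ :=
      hE.exists_infinite_subset_of_separated B.2.1 B.2.2 (hS n)
    exact ⟨⟨C, hC, hCinf⟩, hCB, hCS⟩
  choose step hstep hstepS using next
  let B : ℕ → Infinitary := fun n => Nat.rec ⟨univ, .univ, by simpa using haper⟩ step n
  have hanti : Antitone fun n => (B n).1 := antitone_nat_of_succ_le fun n => hstep n (B n)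
  have hinter : ∀ x ∈ ⋂ n, (B n).1, ∀ y ∈ ⋂ n, (B n).1, E x y → x = y := fun x hx y hy hxy =>
    hsep x trivial y trivial fun n =>
      hstepS n (B n) x (mem_iInter.1 hx (n + 1)) y (mem_iInter.1 hy (n + 1)) hxy
  refine ⟨fun n => (B n).1 \ ⋂ m, (B m).1, fun n => (B n).2.1.diff (.iInter fun m => (B m).2.1),
    fun m n hmn => sdiff_subset_sdiff_left (hanti hmn), ?_, fun n x => ?_⟩
  · exact eq_empty_of_forall_notMem fun x hx =>
      (mem_iInter.1 hx 0).2 (mem_iInter.2 fun n => (mem_iInter.1 hx n).1)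
  · have hsub : {y | E x y ∧ y ∈ ⋂ m, (B m).1}.Subsingleton := fun y hy z hz =>
      hinter y hy.2 z hz.2 (hE.1.trans (hE.1.symm hy.1) hz.1)
    obtain ⟨y, ⟨hxy, hyB⟩, hy⟩ := (((B n).2.2 x).sdiff hsub.finite).nonempty
    exact ⟨y, hxy, hyB, fun h => hy ⟨hxy, h⟩⟩

/- The weight of `x` at stage `n` is the number of points sent to `x` by a Borel retraction onto the
`n`-th of a sequence of vanishing markers. -/
theorem IsCBER.exists_lintegral_eq_measure_univ (hE : IsCBER E)
    (haper : ∀ x, {y | E x y}.Infinite) :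
    ∃ w : ℕ → X → NNReal, (∀ n, Measurable (w n)) ∧ (∀ x, ∃ N, ∀ n ≥ N, w n x = 0) ∧
      ∀ (σ : Measure X) [IsFiniteMeasure σ], IsInvariant E (fun _ _ => 1) σ →
        ∀ n, ∫⁻ x, w n x ∂σ = σ univ := by
  obtain ⟨B, hB, hanti, hempty, hmeet⟩ := hE.exists_vanishing_markers haper
  choose r hr hEr using fun n => hE.exists_measurable_retraction (hB n) (hmeet n)
  let w (n : ℕ) (x : X) : ℝ≥0∞ := (r n ⁻¹' {x}).encard
  have hw : ∀ n, Measurable (w n) := fun n =>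
    hE.measurable_encard (A := {q | r n q.2 = q.1})
      (measurableSet_eq_fun ((hr n).comp measurable_snd) measurable_fst)
      fun x y (hxy : r n y = x) => hE.1.symm (hxy ▸ (hEr n y).1)
  refine ⟨fun n x => (w n x).toNNReal, fun n => (hw n).ennreal_toNNReal, fun x => ?_,
    fun σ _ hσ n => ?_⟩
  · obtain ⟨N, hN⟩ : ∃ N, x ∉ B N := by simpa using (hempty ▸ notMem_empty x : x ∉ ⋂ n, B n)
    refine ⟨N, fun n hn => ?_⟩
    have hfiber : r n ⁻¹' {x} = ∅ := eq_empty_of_forall_notMem fun y (hy : r n y = x) =>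
      hN (hanti hn (hy ▸ (hEr n y).2))
    simp [w, hfiber]
  · have hint : ∫⁻ x, w n x ∂σ = σ univ :=
      hσ.lintegral_encard_fiber hE (hr n) fun x => (hEr n x).1
    rw [← hint]
    refine lintegral_congr_ae ?_
    filter_upwards [ae_lt_top (hw n) (hint ▸ measure_ne_top σ univ)] with x hx
    exact coe_toNNReal hx.ne

theorem IsCBER.exists_lintegral_eq_top (hE : IsCBER E) (haper : ∀ x, {y | E x y}.Infinite) :
    ∃ f : X → ℝ, Measurable f ∧ (∀ x, 0 < f x) ∧ ∀ σ : Measure X,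
      IsInvariant E (fun _ _ => 1) σ → ∫⁻ x, ENNReal.ofReal (f x) ∂σ ≠ ∞ → σ = 0 := by
  obtain ⟨w, hw, hzero, hint⟩ := hE.exists_lintegral_eq_measure_univ haper
  let g (x : X) : ℝ≥0∞ := 1 + ∑' n, (w n x : ℝ≥0∞)
  have hg : Measurable g :=
    .add measurable_const (.tsum fun n => (hw n).coe_nnreal_ennreal)
  have hgtop : ∀ x, g x ≠ ∞ := fun x => by
    obtain ⟨N, hN⟩ := hzero x
    have hsupp : ∀ n ∉ Finset.range N, (w n x : ℝ≥0∞) = 0 := fun n hn => by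
      simp [hN n (by simpa using hn)]
    simp [g, tsum_eq_sum hsupp]
  refine ⟨fun x => (g x).toReal, hg.ennreal_toReal, fun x =>
    toReal_pos (by simp [g]) (hgtop x), fun σ hσ hσg => ?_⟩
  simp only [ofReal_toReal (hgtop _)] at hσg
  have : IsFiniteMeasure σ := ⟨lt_top_iff_ne_top.2 <| ne_top_of_le_ne_top hσg <|
    calc σ univ = ∫⁻ _, 1 ∂σ := lintegral_one.symm
      _ ≤ ∫⁻ x, g x ∂σ := lintegral_mono fun x => le_self_add⟩
  by_contra hσ0
  refine hσg (top_unique ?_)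
  calc ∞ = ∑' n, ∫⁻ x, w n x ∂σ := by
        simp only [hint σ hσ, tsum_const_eq_top_of_ne_zero (Measure.measure_univ_ne_zero.2 hσ0)]
    _ = ∫⁻ x, ∑' n, (w n x : ℝ≥0∞) ∂σ :=
        (lintegral_tsum fun n => (hw n).coe_nnreal_ennreal.aemeasurable).symm
    _ ≤ ∫⁻ x, g x ∂σ := lintegral_mono fun x => le_add_self

end Density

/-- The coboundary `(x, y) ↦ f x / f y` induced by `f : X → (0, ∞)`. -/
noncomputable def coboundary (f : X → ℝ) (x y : X) : ℝ := f x / f y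

/-- The total mass of `Y` with respect to the density `f`. The size of a set relative to another
one for the coboundary of `f` is the quotient of their weights. -/
noncomputable def weight (f : X → ℝ) (Y : Set X) : ℝ≥0∞ := ∑' y : Y, ENNReal.ofReal (f y)

section Coboundary

variable {f : X → ℝ}

theorem weight_ne_zero (hpos : ∀ x, 0 < f x) {Y : Set X} (hY : Y.Nonempty) : weight f Y ≠ 0 := by
  obtain ⟨y, hy⟩ := hY
  exact fun h => (ENNReal.ofReal_pos.2 (hpos y)).ne' (ENNReal.tsum_eq_zero.1 h ⟨y, hy⟩)

theorem weight_ne_top {Y : Set X} (hY : Y.Finite) : weight f Y ≠ ∞ := by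
  have := hY.to_subtype
  have := Fintype.ofFinite Y
  simp [weight, tsum_fintype]

theorem relSize_coboundary {z : X} (hz : 0 < f z) (Y Z : Set X) :
    relSize (coboundary f) Y Z z = weight f Y / weight f Z := by
  have heSize : ∀ W : Set X, eSize (coboundary f) W z = weight f W * (ENNReal.ofReal (f z))⁻¹ :=
    fun W => by
      simp only [eSize, coboundary, weight, ENNReal.ofReal_div_of_pos hz]
      simp only [div_eq_mul_inv, ENNReal.tsum_mul_right]
  rw [relSize, heSize, heSize, ENNReal.mul_div_mul_right _ _ (by simp) (by simp [hz])]

theorem relSize_coboundary_preimage {S : Setoid X} {φ : Quotient S → Quotient S}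
    (hinj : Function.Injective φ) {x z : X} (hx : 0 < f x)
    (hzx : φ (Quotient.mk S z) = Quotient.mk S x) :
    relSize (coboundary f) {y | y ∈ univ ∧ φ (Quotient.mk S y) = Quotient.mk S x} {y | S.r y x} x =
      weight f {y | S.r y z} / weight f {y | S.r y x} := by
  have hfiber : {y | y ∈ univ ∧ φ (Quotient.mk S y) = Quotient.mk S x} = {y | S.r y z} := by
    ext y
    simp only [mem_univ, true_and, mem_ofPred_eq, ← hzx, hinj.eq_iff]
    exact Quotient.eq
  rw [hfiber, relSize_coboundary hx]

variable [MeasurableSpace X] {E : X → X → Prop}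

theorem isCocycle_coboundary (hf : Measurable f) (hpos : ∀ x, 0 < f x) :
    IsCocycle E (coboundary f) :=
  ⟨(hf.comp measurable_fst).div (hf.comp measurable_snd), fun x y _ => div_pos (hpos x) (hpos y),
    fun _ y _ _ _ => (div_mul_div_cancel₀ (hpos y).ne').symm⟩

theorem IsCBER.measurable_weight [StandardBorelSpace X] (hE : IsCBER E) (hf : Measurable f) :
    Measurable fun x => weight f {y | E y x} := by
  have hsum : ∀ x, weight f {y | E y x} =
      ∑' y, {q : X × X | E q.2 q.1}.indicator (fun q => ENNReal.ofReal (f q.2)) (x, y) :=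
    fun x => tsum_subtype {y | E y x} fun y => ENNReal.ofReal (f y)
  simp only [hsum]
  refine hE.measurable_tsum ?_ fun x y hxy =>
    indicator_of_notMem (s := {q : X × X | E q.2 q.1}) (fun hyx => hxy (hE.1.symm hyx)) _
  exact (hf.comp measurable_snd).ennreal_ofReal.indicator (measurable_swap hE.2.1)

theorem IsInvariant.withDensity_inv {ν : Measure X} (hf : Measurable f) (hpos : ∀ x, 0 < f x)
    (hν : IsInvariant E (coboundary f) ν) :
    IsInvariant E (fun _ _ => 1) (ν.withDensity fun x => (ENNReal.ofReal (f x))⁻¹) := by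
  intro T hT B hB
  have hfinv : Measurable fun x => (ENNReal.ofReal (f x))⁻¹ := hf.ennreal_ofReal.inv
  have hTB : MeasurableSet (T '' B) := T.measurableEmbedding.measurableSet_image' hB
  have hcob : Measurable fun x => ENNReal.ofReal (coboundary f (T x) x) :=
    ((hf.comp T.measurable).div hf).ennreal_ofReal
  have hcancel : ∀ x, ENNReal.ofReal (coboundary f (T x) x) * (ENNReal.ofReal (f (T x)))⁻¹ =
      (ENNReal.ofReal (f x))⁻¹ := fun x => by
    rw [coboundary, ENNReal.ofReal_div_of_pos (hpos x), div_eq_mul_inv, mul_right_comm,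
      ENNReal.mul_inv_cancel (by simp [hpos]) (by simp), one_mul]
  calc ν.withDensity (fun x => (ENNReal.ofReal (f x))⁻¹) (T '' B)
      = ∫⁻ x in T '' B, (ENNReal.ofReal (f x))⁻¹
          ∂(ν.withDensity fun x => ENNReal.ofReal (coboundary f (T x) x)).map T := by
        rw [hν.map_withDensity hT, withDensity_apply _ hTB]
    _ = ∫⁻ x in B, ENNReal.ofReal (coboundary f (T x) x) * (ENNReal.ofReal (f (T x)))⁻¹ ∂ν := by
        rw [setLIntegral_map hTB hfinv T.measurable, preimage_image_eq B T.injective,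
          setLIntegral_withDensity_eq_setLIntegral_mul _ hcob (by fun_prop) hB]
        rfl
    _ = ∫⁻ _ in B, ENNReal.ofReal 1 ∂ν.withDensity fun x => (ENNReal.ofReal (f x))⁻¹ := by
        simp only [hcancel, ENNReal.ofReal_one, setLIntegral_one, withDensity_apply _ hB]

theorem not_isInvariant_coboundary (hf : Measurable f) (hpos : ∀ x, 0 < f x)
    (htop : ∀ σ : Measure X, IsInvariant E (fun _ _ => 1) σ →
      ∫⁻ x, ENNReal.ofReal (f x) ∂σ ≠ ∞ → σ = 0)
    {ν : Measure X} [IsFiniteMeasure ν] [NeZero ν] : ¬IsInvariant E (coboundary f) ν := by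
  intro hν
  have hint : ∫⁻ x, ENNReal.ofReal (f x) ∂ν.withDensity (fun x => (ENNReal.ofReal (f x))⁻¹) =
      ν univ := by
    rw [lintegral_withDensity_eq_lintegral_mul _ (by fun_prop) hf.ennreal_ofReal, ← lintegral_one]
    exact lintegral_congr fun x => ENNReal.inv_mul_cancel (by simp [hpos]) (by simp)
  have hzero := htop _ (hν.withDensity_inv hf hpos) (hint ▸ measure_ne_top ν univ)
  rw [hzero, lintegral_zero_measure] at hint
  exact NeZero.ne ν (Measure.measure_univ_eq_zero.1 hint.symm)

end Coboundary

section Compression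

variable [MeasurableSpace X] [StandardBorelSpace X] {E : X → X → Prop} {μ : Measure X}

/- Let every point `z` of `D` send mass `u z` to `ψ z`: no point receives more than it sends, so
almost every point receives exactly what it sends. -/
theorem IsInvariant.exists_forall_mem_image_of_lintegral_ne_top [NeZero μ] (hE : IsCBER E)
    (hμ : IsInvariant E (fun _ _ => 1) μ) {D : Set X} (hD : MeasurableSet D) {ψ : X → X}
    (hψ : Measurable ψ) (hEψ : ∀ x, E x (ψ x)) (hψD : MapsTo ψ D D) (hinj : InjOn ψ D)
    {u : X → ℝ≥0∞} (hu : Measurable u) (hint : ∫⁻ x, u x ∂μ ≠ ∞) (hle : ∀ z ∈ D, u z ≤ u (ψ z)) :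
    ∃ x, ∀ y ∈ D, E x y → u y ≠ 0 → ∃ z ∈ D, ψ z = y ∧ u z = u y := by
  let received (y : X) : ℝ≥0∞ := ∑' x : ψ ⁻¹' {y}, D.indicator u x
  have hreceived : ∀ z ∈ D, received (ψ z) = u z := fun z hz => by
    rw [← indicator_of_mem hz u]
    refine tsum_eq_single (⟨z, rfl⟩ : ψ ⁻¹' {ψ z}) fun x hxz => indicator_of_notMem (fun hx => ?_) u
    exact hxz (Subtype.ext (hinj hx hz x.2))
  have himage : ∀ y, received y ≠ 0 → ∃ z ∈ D, ψ z = y := fun y hy => by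
    by_contra! hno
    exact hy (ENNReal.tsum_eq_zero.2 fun x => indicator_of_notMem (fun hx => hno x hx x.2) u)
  have hreceived_le : ∀ y, received y ≤ D.indicator u y := fun y => by
    obtain hy | hy := eq_or_ne (received y) 0
    · simp [hy]
    · obtain ⟨z, hz, rfl⟩ := himage y hy
      rw [hreceived z hz, indicator_of_mem (hψD hz)]
      exact hle z hz
  have hmass : ∫⁻ y, received y ∂μ = ∫⁻ x, D.indicator u x ∂μ :=
    hμ.lintegral_tsum_fiber hE hψ hEψ (hu.indicator hD)
  have hfin : ∫⁻ y, received y ∂μ ≠ ∞ :=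
    ne_top_of_le_ne_top hint (hmass.trans_le (lintegral_mono (indicator_le_self D u)))
  have hbalance : ∀ᵐ y ∂μ, received y = D.indicator u y :=
    ae_eq_of_ae_le_of_lintegral_le (.of_forall hreceived_le) hfin
      (hu.indicator hD).aemeasurable hmass.ge
  obtain ⟨x, hx⟩ := (hμ.ae_forall hE hbalance).exists
  refine ⟨x, fun y hy hxy huy => ?_⟩
  have hyu : received y = u y := (hx y hxy).trans (indicator_of_mem hy u)
  obtain ⟨z, hz, rfl⟩ := himage y (hyu ▸ huy)
  exact ⟨z, hz, rfl, (hreceived z hz).symm.trans hyu⟩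

theorem IsInvariant.exists_forall_mem_image_of_le [IsFiniteMeasure μ] [NeZero μ] (hE : IsCBER E)
    (hμ : IsInvariant E (fun _ _ => 1) μ) {D : Set X} (hD : MeasurableSet D) {ψ : X → X}
    (hψ : Measurable ψ) (hEψ : ∀ x, E x (ψ x)) (hψD : MapsTo ψ D D) (hinj : InjOn ψ D)
    {u : X → ℝ≥0∞} (hu : Measurable u) (hle : ∀ z ∈ D, u z ≤ u (ψ z)) :
    ∃ x, ∀ y ∈ D, E x y → ∃ z ∈ D, ψ z = y ∧ u z = u y := by
  -- A bounded, positive, strictly increasing function of `u` is integrable and never vanishes.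
  let b (a : ℝ≥0∞) : ℝ≥0∞ := 1 + ENNReal.orderIsoIicOneBirational a
  have hb : StrictMono b := fun s t hst =>
    (ENNReal.add_lt_add_iff_left one_ne_top).2 (ENNReal.orderIsoIicOneBirational.strictMono hst)
  have hb_le : ∀ a, b a ≤ 1 + 1 := fun a =>
    add_le_add_right (ENNReal.orderIsoIicOneBirational a).2 1
  have hint : ∫⁻ x, b (u x) ∂μ ≠ ∞ :=
    ne_top_of_le_ne_top (by simp [ENNReal.mul_eq_top]) (lintegral_mono fun x => hb_le (u x))
  obtain ⟨x, hx⟩ := hμ.exists_forall_mem_image_of_lintegral_ne_top hE hD hψ hEψ hψD hinj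
    (hb.monotone.measurable.comp hu) hint fun z hz => hb.monotone (hle z hz)
  refine ⟨x, fun y hy hxy => ?_⟩
  obtain ⟨z, hz, hzy, hbz⟩ := hx y hy hxy (by simp [b])
  exact ⟨z, hz, hzy, hb.injective hbz⟩

variable {S : Setoid X} {φ : Quotient S → Quotient S}

theorem IsFinSubequiv.exists_measurable_lift (hS : IsFinSubequiv E S.r) (hφ : Measurable φ)
    (hinj : Function.Injective φ) :
    ∃ (D : Set X) (ψ : X → X), MeasurableSet D ∧ (∀ x, ∃ y ∈ D, S.r x y) ∧ Measurable ψ ∧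
      (∀ x, φ (Quotient.mk S x) = Quotient.mk S (ψ x)) ∧ MapsTo ψ D D ∧ InjOn ψ D := by
  obtain ⟨s, hs, hSs, hsS⟩ := hS.exists_measurable_selector
  let t : Quotient S → X := Quotient.lift s hsS
  have ht : Measurable t := measurable_from_quotient.2 hs
  have hmkt : ∀ q, Quotient.mk S (t q) = q := fun q =>
    q.inductionOn fun x => Quotient.sound (hS.1.symm (hSs x))
  have hst : ∀ q, s (t q) = t q := fun q => q.inductionOn fun x => (hsS _ _ (hSs x)).symm
  refine ⟨{x | s x = x}, fun x => t (φ (Quotient.mk S x)), measurableSet_eq_fun hs measurable_id,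
    fun x => ⟨s x, (hsS _ _ (hSs x)).symm, hSs x⟩, ht.comp (hφ.comp measurable_quotient_mk''),
    fun x => (hmkt _).symm, fun x _ => hst _, ?_⟩
  intro x hx y hy hxy
  have hmk : Quotient.mk S x = Quotient.mk S y := hinj (Function.LeftInverse.injective hmkt hxy)
  exact hx.symm.trans ((hsS x y (Quotient.exact hmk)).trans hy)

variable {f : X → ℝ}

theorem not_quotCompressionOn_coboundary [IsFiniteMeasure μ] [NeZero μ] (hE : IsCBER E)
    (hμ : IsInvariant E (fun _ _ => 1) μ) (hf : Measurable f) (hpos : ∀ x, 0 < f x)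
    (hS : IsFinSubequiv E S.r) (hφ : Measurable φ) (hinj : Function.Injective φ) :
    ¬QuotCompressionOn E (coboundary f) univ S φ := by
  rintro ⟨hφE, hle, hlt⟩
  have hne_zero : ∀ x, weight f {y | S.r y x} ≠ 0 := fun x =>
    weight_ne_zero hpos ⟨x, hS.1.refl x⟩
  have hne_top : ∀ x, weight f {y | S.r y x} ≠ ∞ := fun x =>
    weight_ne_top ((hS.2.2.2 x).subset fun y hyx => hS.1.symm hyx)
  obtain ⟨D, ψ, hD, hSD, hψ, hφψ, hψD, hψinj⟩ := hS.exists_measurable_lift hφ hinj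
  have hweight : ∀ z ∈ D, weight f {y | S.r y z} ≤ weight f {y | S.r y (ψ z)} := fun z _ => by
    have hle_one := hle (mem_univ (ψ z))
    rwa [relSize_coboundary_preimage hinj (hpos _) (hφψ z),
      ENNReal.div_le_iff (hne_zero _) (hne_top _), one_mul] at hle_one
  obtain ⟨x, hx⟩ := hμ.exists_forall_mem_image_of_le hE hD hψ
    (fun x => (hφE (mem_univ x) _ (hφψ x)).1) hψD hψinj (hS.isCBER.measurable_weight hf) hweight
  obtain ⟨y, -, hxy, hy⟩ := hlt (mem_univ x)
  obtain ⟨y', hy'D, hyy'⟩ := hSD y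
  obtain ⟨z, -, hzy', hwz⟩ := hx y' hy'D (hE.1.trans hxy (hS.2.2.1 hyy'))
  have hφz : φ (Quotient.mk S z) = Quotient.mk S y := by
    rw [hφψ, hzy']
    exact Quotient.sound (hS.1.symm hyy')
  have hclass : {q | S.r q y'} = {q | S.r q y} := ext fun q =>
    ⟨fun hq => hS.1.trans hq (hS.1.symm hyy'), fun hq => hS.1.trans hq hyy'⟩
  rw [relSize_coboundary_preimage hinj (hpos y) hφz, hwz, hclass,
    ENNReal.div_self (hne_zero y) (hne_top y)] at hy
  exact hy.false

end Compression

/-- If `E` is aperiodic and admits an `E`-invariant Borel probability measure, then there is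
a Borel coboundary `ρ` admitting neither an injective Borel compression of its quotient by a
finite Borel subequivalence relation of `E` nor a `ρ`-invariant Borel probability measure. -/
theorem stmt12 [MeasurableSpace X] [StandardBorelSpace X]
    (E : X → X → Prop) (hE : IsCBER E)
    (haper : ∀ x : X, {y | E x y}.Infinite)
    (hinv : ∃ μ : Measure X, IsProbabilityMeasure μ ∧ IsInvariant E (fun _ _ => 1) μ) :
    ∃ ρ : X → X → ℝ, IsCocycle E ρ ∧
      (∃ f : X → ℝ, Measurable f ∧ (∀ x, 0 < f x) ∧
        ∀ ⦃x y : X⦄, E x y → ρ x y = f x / f y) ∧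
      ¬ (∃ (F : X → X → Prop) (hF : Equivalence F), IsFinSubequiv E F ∧
          ∃ φ : Quotient (Setoid.mk F hF) → Quotient (Setoid.mk F hF),
            Measurable φ ∧ Function.Injective φ ∧
            QuotCompressionOn E ρ Set.univ (Setoid.mk F hF) φ) ∧
      ¬ (∃ μ : Measure X, IsProbabilityMeasure μ ∧ IsInvariant E ρ μ) := by
  obtain ⟨f, hf, hpos, htop⟩ := hE.exists_lintegral_eq_top haper
  refine ⟨coboundary f, isCocycle_coboundary hf hpos, ⟨f, hf, hpos, fun x y _ => rfl⟩, ?_, ?_⟩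
  · rintro ⟨F, _, hF, φ, hφ, hinj, hcompr⟩
    obtain ⟨μ, _, hμ⟩ := hinv
    exact not_quotCompressionOn_coboundary hE hμ hf hpos hF hφ hinj hcompr
  · rintro ⟨ν, _, hν⟩
    exact not_isInvariant_coboundary hf hpos htop hν

end CocycleNadkarni
end

section
/- Let X be a standard Borel space, E a countable Borel equivalence relation on X, ρ : E → (0,∞) a Borel cocycle, and μ a ρ-invariant Borel measure on X. Then μ(B) = ∫ |B ∩ [x]_F|^{[x]_F}_ρ dμ(x) for all Borel sets B ⊆ X and all finite Borel subequivalence relations F of E. -/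
open MeasureTheory Set ENNReal

namespace CocycleNadkarni

variable {X : Type*} {Γ : Type*}

/-!
The proof is a mass transport argument. Let `S x` be the `ρ`-size of the `F`-class of `x`, relative
to `x`. Every point `x ∈ B` spreads a unit mass over its class, sending `ρ y x / S x` to `y`. When
`ρ` is used to convert mass between points, a point `y` receives exactly the `ρ`-size of
`B ∩ [y]_F` relative to `[y]_F`, and the `ρ`-invariance of `μ` says that the mass sent equals the
mass received.

Invariance is only given for Borel automorphisms, so `F` has to be generated by countably many of
them (Feldman–Moore), for which it must be a countable union of Borel graphs (Lusin–Novikov).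
Finiteness of the sizes `S x` writes `F` as a countable union of Borel relations with finite
sections, for which the uniformization is elementary, except that the set of points whose section
has at least `n` elements is a priori only analytic. These sets have empty intersection, and
Novikov's separation theorem provides Borel supersets whose intersection is still empty.
-/

universe u

theorem bar_induction {β : Type*} {P : List β → Prop}
    (bar : ∀ x : ℕ → β, ∃ n, P (PiNat.res x n)) (step : ∀ s, (∀ b, P (b :: s)) → P s) :
    P [] := by
  by_contra hnil
  have extend (s : {s // ¬P s}) : ∃ b, ¬P (b :: s) := not_forall.1 (mt (step s) s.2)
  choose b hb using extend
  let branch : ℕ → {s // ¬P s} := Nat.rec ⟨[], hnil⟩ fun _ s => ⟨b s :: s, hb s⟩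
  have res_eq (n : ℕ) : PiNat.res (fun m => b (branch m)) n = (branch n).1 := by
    induction n with
    | zero => rfl
    | succ n ih => rw [PiNat.res_succ, ih]
  obtain ⟨n, hn⟩ := bar fun m => b (branch m)
  exact (branch n).2 (res_eq n ▸ hn)

/-- Simultaneous separation of a family of sets: its members have measurable supersets with empty
intersection. For a pair of sets this is `MeasureTheory.MeasurablySeparable`. -/
def IsMeasurablySeparated {ι α : Type*} [MeasurableSpace α] (A : ι → Set α) : Prop :=
  ∃ B : ι → Set α, (∀ i, MeasurableSet (B i)) ∧ (∀ i, A i ⊆ B i) ∧ ⋂ i, B i = ∅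

namespace IsMeasurablySeparated

variable {ι α : Type*} [MeasurableSpace α] {A : ι → Set α}

theorem of_subset_of_disjoint {i j : ι} {U V : Set α} (hU : MeasurableSet U)
    (hV : MeasurableSet V) (hi : A i ⊆ U) (hj : A j ⊆ V) (hUV : Disjoint U V) :
    IsMeasurablySeparated A := by
  refine ⟨fun k => {x | (k = i → x ∈ U) ∧ (k = j → x ∈ V)}, fun k => ?_, fun k x hx => ?_, ?_⟩
  · exact (MeasurableSet.const _).imp hU |>.inter ((MeasurableSet.const _).imp hV)
  · exact ⟨fun h => hi (h ▸ hx), fun h => hj (h ▸ hx)⟩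
  · refine eq_empty_of_forall_notMem fun x hx => ?_
    exact hUV.notMem_of_mem_left ((mem_iInter.1 hx i).1 rfl) ((mem_iInter.1 hx j).2 rfl)

theorem of_subset_iUnion {κ : Type*} [Countable κ] {S : κ → ι → Set α} (i₀ : ι)
    (h₀ : A i₀ ⊆ ⋃ v, S v i₀) (h : ∀ i ≠ i₀, ∀ v, A i ⊆ S v i)
    (hS : ∀ v, IsMeasurablySeparated (S v)) : IsMeasurablySeparated A := by
  classical
  choose B hBm hSB hB using hS
  refine ⟨Function.update (fun i => ⋂ v, B v i) i₀ (⋃ v, B v i₀), ?_, ?_, ?_⟩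
  · refine Function.forall_update_iff _ (fun _ s => MeasurableSet s) |>.2
      ⟨.iUnion fun v => hBm v i₀, fun i _ => .iInter fun v => hBm v i⟩
  · refine Function.forall_update_iff _ (fun i s => A i ⊆ s) |>.2
      ⟨h₀.trans (iUnion_mono fun v => hSB v i₀),
        fun i hi => subset_iInter fun v => (h i hi v).trans (hSB v i)⟩
  · refine eq_empty_of_forall_notMem fun x hx => ?_
    rw [mem_iInter, Function.forall_update_iff _ (fun _ s => x ∈ s)] at hx
    obtain ⟨v, hv⟩ := mem_iUnion.1 hx.1
    have hxB : x ∈ ⋂ i, B v i := mem_iInter.2 fun i => by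
      by_cases hi : i = i₀
      · exact hi ▸ hv
      · exact mem_iInter.1 (hx.2 i hi) v
    exact (hB v).le hxB

end IsMeasurablySeparated

section Novikov

variable {α : Type*}

/-- The `n`-th member of the family of images of the cylinder `s` under the maps `f n`, applied to
the `n`-th column of a point of Baire space: one point `w` encodes the sequence of points
`fun i => w (Nat.pair n i)`, so that a single cylinder restricts all the `f n` at once. -/
def cylinderImage (f : ℕ → (ℕ → ℕ) → α) (s : List ℕ) (n : ℕ) : Set α :=
  (fun w => f n fun i => w (Nat.pair n i)) '' {w | PiNat.res w s.length = s}

theorem exists_cylinderImage_subset [TopologicalSpace α] {f : ℕ → (ℕ → ℕ) → α} {n : ℕ}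
    (hf : Continuous (f n)) {w : ℕ → ℕ} {U : Set α} (hU : IsOpen U)
    (hw : (f n fun i => w (Nat.pair n i)) ∈ U) :
    ∃ M, ∀ m ≥ M, cylinderImage f (PiNat.res w m) n ⊆ U := by
  have hopen : IsOpen ((fun w : ℕ → ℕ => f n fun i => w (Nat.pair n i)) ⁻¹' U) :=
    hU.preimage (by fun_prop)
  obtain ⟨_, ⟨x, M, rfl⟩, hwx, hsub⟩ :=
    (PiNat.isTopologicalBasis_cylinders fun _ => ℕ).exists_subset_of_mem_open hw hopen
  refine ⟨M, fun m hm => image_subset_iff.2 fun z hz => hsub ?_⟩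
  rw [PiNat.mem_cylinder_iff_eq.1 hwx |>.symm]
  rw [mem_ofPred_eq, PiNat.res_length, PiNat.res_eq_res] at hz
  exact PiNat.mem_cylinder_iff.2 fun i hi => hz (hi.trans_le hm)

theorem cylinderImage_step [MeasurableSpace α] {f : ℕ → (ℕ → ℕ) → α} {s : List ℕ}
    (hs : ∀ v, IsMeasurablySeparated (cylinderImage f (v :: s))) :
    IsMeasurablySeparated (cylinderImage f s) := by
  refine .of_subset_iUnion (Nat.unpair s.length).1 ?_ (fun n hn v => ?_) hs
  · rintro _ ⟨w, hw, rfl⟩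
    exact mem_iUnion.2 ⟨w s.length, w, congrArg (w s.length :: ·) hw, rfl⟩
  · rintro _ ⟨w, hw, rfl⟩
    refine ⟨Function.update w s.length v, ?_, ?_⟩
    · have hres : PiNat.res (Function.update w s.length v) s.length = s := by
        refine .trans (PiNat.res_eq_res.2 fun m hm => ?_) hw
        exact Function.update_of_ne hm.ne _ _
      simp only [mem_ofPred_eq, List.length_cons, PiNat.res_succ, hres, Function.update_self]
    · have hpair (i : ℕ) : Nat.pair n i ≠ s.length := fun h => hn (by simp [← h])
      simp only [ne_eq, hpair, not_false_eq_true, Function.update_of_ne]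

variable [TopologicalSpace α] [T2Space α] [MeasurableSpace α] [OpensMeasurableSpace α]

theorem isMeasurablySeparated_range {f : ℕ → (ℕ → ℕ) → α} (hf : ∀ n, Continuous (f n))
    (h : ⋂ n, range (f n) = ∅) : IsMeasurablySeparated fun n => range (f n) := by
  have hnil : IsMeasurablySeparated (cylinderImage f []) := by
    refine bar_induction (P := fun s => IsMeasurablySeparated (cylinderImage f s))
      (fun w => ?_) fun s => cylinderImage_step
    obtain ⟨k, hk⟩ : ∃ k, (f k fun i => w (Nat.pair k i)) ≠ f 0 fun i => w (Nat.pair 0 i) := by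
      by_contra! hconst
      exact h.le (mem_iInter.2 fun n => ⟨_, hconst n⟩)
    obtain ⟨U, V, hU, hV, hkU, h0V, hUV⟩ := t2_separation hk
    obtain ⟨M, hM⟩ := exists_cylinderImage_subset (hf k) hU hkU
    obtain ⟨N, hN⟩ := exists_cylinderImage_subset (hf 0) hV h0V
    exact ⟨max M N, .of_subset_of_disjoint hU.measurableSet hV.measurableSet
      (hM _ (le_max_left M N)) (hN _ (le_max_right M N)) hUV⟩
  convert hnil using 2 with n
  refine Subset.antisymm ?_ (by rintro _ ⟨w, -, rfl⟩; exact mem_range_self _)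
  rintro _ ⟨z, rfl⟩
  exact ⟨fun j => z (Nat.unpair j).2, rfl, by simp⟩

/-- **Novikov's separation theorem**, the version of the Lusin separation theorem for sequences. -/
theorem isMeasurablySeparated_of_analyticSet {A : ℕ → Set α} (hA : ∀ n, AnalyticSet (A n))
    (h : ⋂ n, A n = ∅) : IsMeasurablySeparated A := by
  by_cases hempty : ∃ n, A n = ∅
  · obtain ⟨n, hn⟩ := hempty
    exact .of_subset_of_disjoint .empty .empty hn.le hn.le disjoint_bot_left
  · push Not at hempty
    have hrange (n : ℕ) : ∃ f : (ℕ → ℕ) → α, Continuous f ∧ range f = A n :=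
      ((AnalyticSet_def (A n)).mp (hA n)).resolve_left (hempty n).ne_empty
    choose f hf hfA using hrange
    obtain rfl : (fun n => range (f n)) = A := funext hfA
    exact isMeasurablySeparated_range hf h

end Novikov

/-- `R` is the union of countably many measurable graphs of partial functions from `α` to `β`, where
a graph is a set on which the first projection is injective. -/
def IsCountableGraphUnion {α β : Type*} [MeasurableSpace α] [MeasurableSpace β]
    (R : Set (α × β)) : Prop :=
  ∃ 𝒢 : Set (Set (α × β)), 𝒢.Countable ∧ (∀ G ∈ 𝒢, MeasurableSet G ∧ InjOn Prod.fst G) ∧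
    ⋃₀ 𝒢 = R

namespace IsCountableGraphUnion

variable {α β : Type*} [MeasurableSpace α] [MeasurableSpace β]

theorem of_injOn {G : Set (α × β)} (hG : MeasurableSet G) (hinj : InjOn Prod.fst G) :
    IsCountableGraphUnion G :=
  ⟨{G}, countable_singleton G, by simpa using ⟨hG, hinj⟩, sUnion_singleton G⟩

theorem iUnion {ι : Type*} [Countable ι] {R : ι → Set (α × β)}
    (hR : ∀ i, IsCountableGraphUnion (R i)) : IsCountableGraphUnion (⋃ i, R i) := by
  choose 𝒢 hcount hgraph hunion using hR
  refine ⟨⋃ i, 𝒢 i, countable_iUnion hcount, fun G hG => ?_, ?_⟩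
  · obtain ⟨i, hi⟩ := mem_iUnion.1 hG
    exact hgraph i G hi
  · rw [sUnion_iUnion, iUnion_congr hunion]

theorem union {R S : Set (α × β)} (hR : IsCountableGraphUnion R)
    (hS : IsCountableGraphUnion S) : IsCountableGraphUnion (R ∪ S) := by
  rw [union_eq_iUnion]
  exact iUnion (Bool.forall_bool.2 ⟨hS, hR⟩)

theorem measurableSet_image_fst [StandardBorelSpace α] [StandardBorelSpace β]
    {R : Set (α × β)} (hR : IsCountableGraphUnion R) : MeasurableSet (Prod.fst '' R) := by
  obtain ⟨𝒢, hcount, hgraph, rfl⟩ := hR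
  rw [sUnion_eq_biUnion, image_iUnion₂]
  exact .biUnion hcount fun G hG =>
    (hgraph G hG).1.image_of_measurable_injOn measurable_fst (hgraph G hG).2

end IsCountableGraphUnion

theorem encard_le_of_subset_of_notMem {γ : Type*} {s t : Set γ} {a : γ} {n : ℕ} (hts : t ⊆ s)
    (has : a ∈ s) (hat : a ∉ t) (hs : s.encard ≤ n + 1) : t.encard ≤ n := by
  have hinsert : t.encard + 1 ≤ n + 1 := by
    rw [← encard_insert_of_notMem hat]
    exact (encard_le_encard (insert_subset has hts)).trans hs
  exact (ENat.add_le_add_iff_right ENat.one_ne_top).1 hinsert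

section LargerPairs

variable {α β : Type*} {R : Set (α × β)} {e : β → ℝ}

/-- The pairs of a point `(x, y)` of `R` and a `z` in the same section of `R` such that `e y < e z`.
The first projection of this set is `R` without the `e`-maximal points of the sections of `R`. -/
def largerPairs (R : Set (α × β)) (e : β → ℝ) : Set ((α × β) × β) :=
  {p | p.1 ∈ R ∧ (p.1.1, p.2) ∈ R ∧ e p.1.2 < e p.2}

theorem measurableSet_largerPairs [MeasurableSpace α] [MeasurableSpace β] (hR : MeasurableSet R)
    (he : Measurable e) : MeasurableSet (largerPairs R e) := by
  have hsection : Measurable fun p : (α × β) × β => (p.1.1, p.2) := by fun_prop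
  exact (measurable_fst hR).inter <| (hsection hR).inter <|
    measurableSet_lt (he.comp (measurable_snd.comp measurable_fst)) (he.comp measurable_snd)

theorem image_fst_largerPairs_subset : Prod.fst '' largerPairs R e ⊆ R :=
  image_subset_iff.2 fun _ hp => hp.1

theorem encard_largerPairs_le {n : ℕ} (hR : ∀ x, (Prod.mk x ⁻¹' R).encard ≤ n + 1)
    (p : α × β) : (Prod.mk p ⁻¹' largerPairs R e).encard ≤ n := by
  by_cases hp : p ∈ R
  · exact encard_le_of_subset_of_notMem (fun z hz => hz.2.1) hp (fun h => h.2.2.false) (hR p.1)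
  · have hempty : Prod.mk p ⁻¹' largerPairs R e = ∅ :=
      eq_empty_of_forall_notMem fun z hz => hp hz.1
    exact (encard_eq_zero.2 hempty).trans_le zero_le

theorem encard_image_fst_largerPairs_le {n : ℕ} (hR : ∀ x, (Prod.mk x ⁻¹' R).encard ≤ n + 1)
    (x : α) : (Prod.mk x ⁻¹' (Prod.fst '' largerPairs R e)).encard ≤ n := by
  have hsub : Prod.mk x ⁻¹' (Prod.fst '' largerPairs R e) ⊆ Prod.mk x ⁻¹' R :=
    preimage_mono image_fst_largerPairs_subset
  rcases (Prod.mk x ⁻¹' R).eq_empty_or_nonempty with hx | hx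
  · exact (encard_eq_zero.2 (subset_empty_iff.1 (hsub.trans hx.le))).trans_le zero_le
  · obtain ⟨y, hy, hmax⟩ := exists_max_image _ e (finite_of_encard_le_coe (hR x)) hx
    refine encard_le_of_subset_of_notMem hsub hy ?_ (hR x)
    rintro ⟨⟨_, z⟩, ⟨-, hz, hlt⟩, rfl⟩
    exact hlt.not_ge (hmax z hz)

theorem injOn_fst_sdiff_image_fst_largerPairs (he : Function.Injective e) :
    InjOn Prod.fst (R \ Prod.fst '' largerPairs R e) := by
  rintro ⟨x, y⟩ ⟨hy, hy'⟩ ⟨_, z⟩ ⟨hz, hz'⟩ rfl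
  have hyz : e y = e z := le_antisymm
    (not_lt.1 fun hlt => hz' ⟨((x, z), y), ⟨hz, hy, hlt⟩, rfl⟩)
    (not_lt.1 fun hlt => hy' ⟨((x, y), z), ⟨hy, hz, hlt⟩, rfl⟩)
  rw [he hyz]

end LargerPairs

theorem le_encard_iff_exists_injective {γ : Type*} {s : Set γ} {n : ℕ} :
    n ≤ s.encard ↔ ∃ t : Fin n → γ, Function.Injective t ∧ ∀ i, t i ∈ s := by
  constructor
  · intro hn
    obtain ⟨t, hts, ht⟩ := exists_subset_encard_eq hn
    have : Finite t := finite_of_encard_eq_coe ht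
    have hcard : Nat.card t = n := congrArg ENat.toNat ht
    let e : Fin n ≃ t := (Finite.equivFinOfCardEq hcard).symm
    exact ⟨fun i => e i, Subtype.val_injective.comp e.injective, fun i => hts (e i).2⟩
  · rintro ⟨t, ht, hts⟩
    calc (n : ℕ∞) = ENat.card (Fin n) := by
          rw [ENat.card_eq_coe_fintype_card, Fintype.card_fin]
      _ ≤ (range t).encard := ht.encard_range
      _ ≤ s.encard := encard_le_encard (range_subset_iff.2 hts)

theorem analyticSet_setOf_le_encard {α β : Type*} [TopologicalSpace α] [PolishSpace α]
    [MeasurableSpace α] [BorelSpace α] [MeasurableSpace β] [StandardBorelSpace β]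
    {R : Set (α × β)} (hR : MeasurableSet R) (n : ℕ) :
    AnalyticSet {x | n ≤ (Prod.mk x ⁻¹' R).encard} := by
  let S : Set (α × (Fin n → β)) := {p | Function.Injective p.2 ∧ ∀ i, (p.1, p.2 i) ∈ R}
  have hS : MeasurableSet S := by
    have hinj (i j : Fin n) : MeasurableSet {p : α × (Fin n → β) | p.2 i = p.2 j} :=
      measurableSet_eq_fun (by fun_prop) (by fun_prop)
    have hmem (i : Fin n) : Measurable fun p : α × (Fin n → β) => (p.1, p.2 i) := by fun_prop
    refine measurableSet_setOfPred.2 (.and (.forall fun i => .forall fun j => ?_) (.forall ?_))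
    · exact (measurableSet_setOfPred.1 (hinj i j)).imp measurable_const
    · exact fun i => measurableSet_setOfPred.1 (hmem i hR)
  have himage : Prod.fst '' S = {x | n ≤ (Prod.mk x ⁻¹' R).encard} := by
    ext x
    simp only [le_encard_iff_exists_injective, mem_ofPred_eq]
    exact ⟨fun ⟨p, hp, hx⟩ => ⟨p.2, hx ▸ hp⟩, fun ⟨t, ht⟩ => ⟨(x, t), ht, rfl⟩⟩
  rw [← himage]
  exact hS.analyticSet_image measurable_fst

namespace IsCountableGraphUnion

theorem of_encard_le {β : Type u} [MeasurableSpace β] [StandardBorelSpace β] (n : ℕ) :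
    ∀ {α : Type u} [MeasurableSpace α] [StandardBorelSpace α] {R : Set (α × β)},
      MeasurableSet R → (∀ x, (Prod.mk x ⁻¹' R).encard ≤ n) → IsCountableGraphUnion R := by
  obtain ⟨e, he⟩ := exists_measurableEmbedding_real β
  induction n with
  | zero =>
    intro α _ _ R hR hcard
    refine of_injOn hR fun p hp => ?_
    have hempty : Prod.mk p.1 ⁻¹' R = ∅ := encard_eq_zero.1 (nonpos_iff_eq_zero.1 (hcard p.1))
    exact absurd hp (eq_empty_iff_forall_notMem.1 hempty p.2)
  | succ n ih =>
    intro α _ _ R hR hcard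
    have hlarger : IsCountableGraphUnion (largerPairs R e) :=
      ih (measurableSet_largerPairs hR he.measurable) (encard_largerPairs_le hcard)
    have himage : MeasurableSet (Prod.fst '' largerPairs R e) := hlarger.measurableSet_image_fst
    rw [← union_sdiff_cancel (image_fst_largerPairs_subset (R := R) (e := e))]
    exact (ih himage (encard_image_fst_largerPairs_le hcard)).union <|
      of_injOn (hR.diff himage) (injOn_fst_sdiff_image_fst_largerPairs he.injective)

theorem of_finite {α β : Type u} [MeasurableSpace α] [StandardBorelSpace α] [MeasurableSpace β]
    [StandardBorelSpace β] {R : Set (α × β)} (hR : MeasurableSet R)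
    (hfin : ∀ x, (Prod.mk x ⁻¹' R).Finite) : IsCountableGraphUnion R := by
  let _ := upgradeStandardBorel α
  have hempty : ⋂ n : ℕ, {x | n ≤ (Prod.mk x ⁻¹' R).encard} = ∅ := by
    refine eq_empty_of_forall_notMem fun x hx => (hfin x).encard_lt_top.ne ?_
    exact ENat.eq_top_iff_forall_ge.2 fun n => mem_iInter.1 hx n
  obtain ⟨B, hB, hsub, hBempty⟩ :=
    isMeasurablySeparated_of_analyticSet (analyticSet_setOf_le_encard hR) hempty
  have hcover : R = ⋃ n, R ∩ Prod.fst ⁻¹' (B n)ᶜ := by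
    rw [← inter_iUnion, ← preimage_iUnion, ← compl_iInter, hBempty, compl_empty, preimage_univ,
      inter_univ]
  rw [hcover]
  refine iUnion fun n => of_encard_le n (hR.inter (measurable_fst (hB n).compl)) fun x => ?_
  rcases em (x ∈ B n) with hx | hx
  · have hxempty : Prod.mk x ⁻¹' (R ∩ Prod.fst ⁻¹' (B n)ᶜ) = ∅ :=
      eq_empty_of_forall_notMem fun y hy => hy.2 hx
    exact (encard_eq_zero.2 hxempty).trans_le zero_le
  · exact (encard_le_encard (preimage_mono inter_subset_left)).trans
      (not_le.1 (mt (@hsub n x) hx)).le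

theorem of_tsum_ne_top {α β : Type u} [MeasurableSpace α] [StandardBorelSpace α]
    [MeasurableSpace β] [StandardBorelSpace β] {R : Set (α × β)} (hR : MeasurableSet R)
    {w : α × β → ℝ≥0∞} (hw : Measurable w) (hpos : ∀ p ∈ R, w p ≠ 0)
    (hsum : ∀ x, ∑' y : Prod.mk x ⁻¹' R, w (x, y) ≠ ∞) : IsCountableGraphUnion R := by
  let S (n : ℕ) : Set (α × β) := {p | p ∈ R ∧ (n : ℝ≥0∞)⁻¹ ≤ w p}
  have hS (n : ℕ) : MeasurableSet (S n) := hR.inter (measurableSet_le measurable_const hw)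
  have hSfin (n : ℕ) (x : α) : (Prod.mk x ⁻¹' S n).Finite := by
    have hlarge := ENNReal.finite_const_le_of_tsum_ne_top (hsum x)
      (ENNReal.inv_ne_zero.2 (ENNReal.natCast_ne_top n))
    exact (hlarge.image Subtype.val).subset fun y hy => ⟨⟨y, hy.1⟩, hy.2, rfl⟩
  have hcover : R = ⋃ n, S n := by
    refine Subset.antisymm (fun p hp => ?_) (iUnion_subset fun n p hp => hp.1)
    obtain ⟨n, hn⟩ := ENNReal.exists_inv_nat_lt (hpos p hp)
    exact mem_iUnion.2 ⟨n, hp, hn.le⟩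
  rw [hcover]
  exact iUnion fun n => of_finite (hS n) (hSfin n)

end IsCountableGraphUnion

section FeldmanMoore

variable [MeasurableSpace X]

/-- `H` is the graph of a Borel involution of a subset of `X`. -/
structure IsPartialInvolutionGraph (H : Set (X × X)) : Prop where
  measurableSet : MeasurableSet H
  symm : ∀ ⦃x y⦄, (x, y) ∈ H → (y, x) ∈ H
  injOn_fst : InjOn Prod.fst H

namespace IsPartialInvolutionGraph

theorem union_preimage_swap {G : Set (X × X)} (hG : MeasurableSet G) (hfst : InjOn Prod.fst G)
    (hsnd : InjOn Prod.snd G) (hdisj : Disjoint (Prod.fst '' G) (Prod.snd '' G)) :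
    IsPartialInvolutionGraph (G ∪ Prod.swap ⁻¹' G) := by
  refine ⟨hG.union (measurable_swap hG), fun x y => Or.symm, ?_⟩
  have not_both {p q : X × X} (hp : p ∈ G) (hq : q ∈ G) (h : p.1 = q.2) : False :=
    hdisj.le_bot ⟨mem_image_of_mem Prod.fst hp, h ▸ mem_image_of_mem Prod.snd hq⟩
  rintro p (hp | hp) q (hq | hq) hpq
  · exact hfst hp hq hpq
  · exact (not_both hp hq hpq).elim
  · exact (not_both hq hp hpq.symm).elim
  · exact Prod.swap_injective (hsnd hp hq hpq)

theorem exists_measurableEquiv [StandardBorelSpace X] {H : Set (X × X)}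
    (hH : IsPartialInvolutionGraph H) :
    ∃ T : X ≃ᵐ X, (∀ x y, (x, y) ∈ H → T x = y) ∧ ∀ x, T x = x ∨ (x, T x) ∈ H := by
  have : StandardBorelSpace H := hH.measurableSet.standardBorel
  have hfst : MeasurableEmbedding fun p : H => p.1.1 :=
    (measurable_fst.comp measurable_subtype_coe).measurableEmbedding hH.injOn_fst.injective
  let t : X → X := Function.extend (fun p : H => p.1.1) (fun p => p.1.2) id
  have ht : Measurable t :=
    hfst.measurable_extend (measurable_snd.comp measurable_subtype_coe) measurable_id
  have ht_eq (x y : X) (hxy : (x, y) ∈ H) : t x = y := hfst.injective.extend_apply _ _ ⟨_, hxy⟩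
  have ht_or (x : X) : t x = x ∨ (x, t x) ∈ H := by
    by_cases h : ∃ p : H, p.1.1 = x
    · obtain ⟨⟨⟨x, y⟩, hxy⟩, rfl⟩ := h
      exact .inr ((ht_eq x y hxy).symm ▸ hxy)
    · exact .inl (Function.extend_apply' _ _ x h)
  have hinv : Function.Involutive t := fun x => by
    obtain hx | hx := ht_or x
    · rw [hx, hx]
    · exact ht_eq _ _ (hH.symm hx)
  exact ⟨.ofInvolutive t hinv ht, ht_eq, ht_or⟩

end IsPartialInvolutionGraph

variable [StandardBorelSpace X] {F : X → X → Prop}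

theorem IsCountableGraphUnion.exists_isPartialInvolutionGraph
    (hF : IsCountableGraphUnion {p : X × X | F p.1 p.2}) (hsymm : ∀ ⦃x y⦄, F x y → F y x) :
    ∃ 𝒥 : Set (Set (X × X)), 𝒥.Countable ∧ (∀ H ∈ 𝒥, IsPartialInvolutionGraph H) ∧
      ∀ x y, x ≠ y → (F x y ↔ ∃ H ∈ 𝒥, (x, y) ∈ H) := by
  obtain ⟨𝒢, hcount, hgraph, hunion⟩ := hF
  have hF_iff (x y : X) : F x y ↔ ∃ G ∈ 𝒢, (x, y) ∈ G := (Set.ext_iff.1 hunion (x, y)).symm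
  obtain ⟨U, hU, hsep⟩ := exists_seq_separating X MeasurableSet.empty univ
  let piece (i : 𝒢 × 𝒢 × ℕ) : Set (X × X) :=
    i.1 ∩ Prod.swap ⁻¹' i.2.1 ∩ U i.2.2 ×ˢ (U i.2.2)ᶜ
  have hpiece (i : 𝒢 × 𝒢 × ℕ) :
      IsPartialInvolutionGraph (piece i ∪ Prod.swap ⁻¹' piece i) := by
    obtain ⟨⟨G, hG⟩, ⟨G', hG'⟩, n⟩ := i
    refine .union_preimage_swap ?_ ((hgraph G hG).2.mono fun p hp => hp.1.1) ?_ ?_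
    · exact ((hgraph G hG).1.inter (measurable_swap (hgraph G' hG').1)).inter
        ((hU n).prod (hU n).compl)
    · exact fun p hp q hq h => Prod.swap_injective ((hgraph G' hG').2 hp.1.2 hq.1.2 h)
    · refine Disjoint.mono ?_ ?_ (disjoint_compl_right (a := U n))
      · exact image_subset_iff.2 fun p hp => hp.2.1
      · exact image_subset_iff.2 fun p hp => hp.2.2
  have : Countable 𝒢 := hcount
  refine ⟨range fun i => piece i ∪ Prod.swap ⁻¹' piece i, countable_range _,
    forall_mem_range.2 hpiece, fun x y hne => ?_⟩
  rw [exists_range_iff]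
  constructor
  · intro hxy
    obtain ⟨G, hG, hxyG⟩ := (hF_iff x y).1 hxy
    obtain ⟨G', hG', hyxG'⟩ := (hF_iff y x).1 (hsymm hxy)
    obtain ⟨n, hn⟩ := not_forall.1 (mt (hsep x trivial y trivial) hne)
    by_cases hx : x ∈ U n
    · exact ⟨(⟨G, hG⟩, ⟨G', hG'⟩, n), .inl ⟨⟨hxyG, hyxG'⟩, hx, by tauto⟩⟩
    · exact ⟨(⟨G', hG'⟩, ⟨G, hG⟩, n), .inr ⟨⟨hyxG', hxyG⟩, by tauto, hx⟩⟩
  · rintro ⟨i, h | h⟩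
    · exact (hF_iff x y).2 ⟨i.1, i.1.2, h.1.1⟩
    · exact (hF_iff x y).2 ⟨i.2.1, i.2.1.2, h.1.2⟩

/-- The **Feldman–Moore theorem** for relations that are countable unions of Borel graphs. -/
theorem IsCountableGraphUnion.exists_seq_measurableEquiv
    (hF : IsCountableGraphUnion {p : X × X | F p.1 p.2}) (hrefl : ∀ x, F x x)
    (hsymm : ∀ ⦃x y⦄, F x y → F y x) :
    ∃ T : ℕ → X ≃ᵐ X, ∀ x y, F x y ↔ ∃ n, T n x = y := by
  obtain ⟨𝒥, hcount, hgraph, hF_iff⟩ := hF.exists_isPartialInvolutionGraph hsymm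
  choose! S hS_eq hS using fun H hH => (hgraph H hH).exists_measurableEquiv
  obtain ⟨T, hT⟩ :=
    ((hcount.image S).insert (.refl X)).exists_eq_range (insert_nonempty _ _)
  refine ⟨T, fun x y => ?_⟩
  have hrange : (∃ n, T n x = y) ↔ x = y ∨ ∃ H ∈ 𝒥, S H x = y := by
    rw [← exists_range_iff (p := fun T : X ≃ᵐ X => T x = y), ← hT, exists_mem_insert,
      exists_mem_image]
    rfl
  rw [hrange]
  rcases eq_or_ne x y with rfl | hne
  · exact iff_of_true (hrefl x) (.inl rfl)
  · rw [hF_iff x y hne, or_iff_right hne]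
    refine exists_congr fun H => and_congr_right fun hH => ⟨hS_eq H hH x y, ?_⟩
    rintro rfl
    exact (hS H hH x).resolve_left hne.symm

end FeldmanMoore

section Enumeration

theorem tsum_subtype_eq_tsum_indicator {ι α : Type*} {N : Set ι} {s : Set α} {t : ι → α}
    (ht : BijOn t N s) (g : α → ℝ≥0∞) :
    ∑' y : s, g y = ∑' i, N.indicator (fun i => g (t i)) i := by
  rw [← tsum_subtype]
  exact ((ht.equiv t).tsum_eq fun y => g y).symm

variable [MeasurableSpace X] {T : ℕ → X ≃ᵐ X}

/-- The points `x` for which `T n x` is not already among `T 0 x, …, T (n - 1) x`. The maps `T n`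
restricted to these sets list every orbit `{T n x | n}` without repetition. -/
def freshSet (T : ℕ → X ≃ᵐ X) (n : ℕ) : Set X :=
  {x | ∀ m < n, T m x ≠ T n x}

theorem measurableSet_freshSet [MeasurableEq X] (n : ℕ) : MeasurableSet (freshSet T n) := by
  have hne (m : ℕ) : MeasurableSet {x | T m x ≠ T n x} :=
    (measurableSet_eq_fun (T m).measurable (T n).measurable).compl
  simp only [freshSet, ofPred_forall]
  exact .iInter fun m => .iInter fun _ => hne m

theorem exists_mem_freshSet {x y : X} (h : ∃ n, T n x = y) :
    ∃ n, x ∈ freshSet T n ∧ T n x = y := by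
  classical
  refine ⟨Nat.find h, fun m hm heq => ?_, Nat.find_spec h⟩
  exact Nat.find_min h hm (heq.trans (Nat.find_spec h))

theorem eq_of_mem_freshSet {x : X} {m n : ℕ} (hm : x ∈ freshSet T m) (hn : x ∈ freshSet T n)
    (h : T m x = T n x) : m = n :=
  le_antisymm (not_lt.1 fun hlt => hm n hlt h.symm) (not_lt.1 fun hlt => hn m hlt h)

variable {F : X → X → Prop}

theorem tsum_class_eq_tsum_apply (hsymm : ∀ ⦃x y⦄, F x y → F y x)
    (hT : ∀ x y, F x y ↔ ∃ n, T n x = y) (g : X → ℝ≥0∞) (x : X) :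
    ∑' y : {y | F y x}, g y = ∑' n, (freshSet T n).indicator (fun z => g (T n z)) x := by
  have hbij : BijOn (fun n => T n x) {n | x ∈ freshSet T n} {y | F y x} :=
    ⟨fun n _ => hsymm ((hT _ _).2 ⟨n, rfl⟩), fun _ hm _ hn h => eq_of_mem_freshSet hm hn h,
      fun y hy => exists_mem_freshSet ((hT x y).1 (hsymm hy))⟩
  exact tsum_subtype_eq_tsum_indicator hbij g

theorem tsum_class_eq_tsum_symm_apply (hT : ∀ x y, F x y ↔ ∃ n, T n x = y) (g : X → ℝ≥0∞)
    (x : X) : ∑' y : {y | F y x}, g y = ∑' n, (freshSet T n).indicator g ((T n).symm x) := by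
  have hsymm_eq {n : ℕ} {y : X} : (T n).symm x = y ↔ T n y = x :=
    (T n).toEquiv.symm_apply_eq.trans eq_comm
  have hbij : BijOn (fun n => (T n).symm x) {n | (T n).symm x ∈ freshSet T n} {y | F y x} := by
    refine ⟨fun n _ => (hT _ _).2 ⟨n, hsymm_eq.1 rfl⟩, fun m hm n hn h => ?_, fun y hy => ?_⟩
    · have h : (T m).symm x = (T n).symm x := h
      have hm : (T n).symm x ∈ freshSet T m := h ▸ mem_ofPred.1 hm
      exact eq_of_mem_freshSet hm hn ((hsymm_eq.1 h).trans (hsymm_eq.1 rfl).symm)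
    · obtain ⟨n, hn, hny⟩ := exists_mem_freshSet ((hT y x).1 hy)
      exact ⟨n, mem_ofPred.2 ((hsymm_eq.2 hny).symm ▸ hn), hsymm_eq.2 hny⟩
  exact tsum_subtype_eq_tsum_indicator hbij g

theorem measurable_tsum_class [MeasurableEq X] (hsymm : ∀ ⦃x y⦄, F x y → F y x)
    (hT : ∀ x y, F x y ↔ ∃ n, T n x = y) {g : X → X → ℝ≥0∞}
    (hg : Measurable fun p : X × X => g p.1 p.2) :
    Measurable fun x => ∑' y : {y | F y x}, g x y := by
  simp only [tsum_class_eq_tsum_apply hsymm hT]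
  exact .tsum fun n => (hg.comp (measurable_id.prodMk (T n).measurable)).indicator
    (measurableSet_freshSet n)

end Enumeration

section MassTransport

variable [MeasurableSpace X] {E F : X → X → Prop} {ρ : X → X → ℝ} {μ : Measure X}

theorem IsCocycle.mono (hρ : IsCocycle E ρ) (hFE : ∀ ⦃x y⦄, F x y → E x y) : IsCocycle F ρ :=
  ⟨hρ.1, fun _ _ h => hρ.2.1 (hFE h), fun _ _ _ h h' => hρ.2.2 (hFE h) (hFE h')⟩

theorem IsInvariant.mono (hμ : IsInvariant E ρ μ) (hFE : ∀ ⦃x y⦄, F x y → E x y) :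
    IsInvariant F ρ μ :=
  fun T hT => hμ T fun x => hFE (hT x)

theorem IsInvariant.lintegral_mul_comp (hμ : IsInvariant E ρ μ)
    (hρ : Measurable fun p : X × X => ρ p.1 p.2) {T : X ≃ᵐ X} (hT : ∀ x, E (T x) x)
    {f : X → ℝ≥0∞} (hf : Measurable f) :
    ∫⁻ x, ENNReal.ofReal (ρ (T x) x) * f (T x) ∂μ = ∫⁻ x, f x ∂μ := by
  have hdensity : Measurable fun x => ENNReal.ofReal (ρ (T x) x) :=
    (hρ.comp (T.measurable.prodMk measurable_id)).ennreal_ofReal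
  have hmap : (μ.withDensity fun x => ENNReal.ofReal (ρ (T x) x)).map T = μ := by
    ext B hB
    rw [Measure.map_apply T.measurable hB, withDensity_apply _ (T.measurable hB),
      ← hμ T hT _ (T.measurable hB), image_preimage_eq _ T.surjective]
  calc ∫⁻ x, ENNReal.ofReal (ρ (T x) x) * f (T x) ∂μ
      = ∫⁻ x, f (T x) ∂μ.withDensity fun x => ENNReal.ofReal (ρ (T x) x) :=
        (lintegral_withDensity_eq_lintegral_mul μ hdensity (hf.comp T.measurable)).symm
    _ = ∫⁻ x, f x ∂(μ.withDensity fun x => ENNReal.ofReal (ρ (T x) x)).map T :=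
        (lintegral_map hf T.measurable).symm
    _ = ∫⁻ x, f x ∂μ := by rw [hmap]

/-- The **mass transport principle**: the total mass that the points send to the members of their
classes equals the total mass that they receive, where the factor `ρ y x` converts mass at `y` into
mass at `x`. -/
theorem IsInvariant.lintegral_tsum_class [MeasurableEq X] (hμ : IsInvariant F ρ μ)
    (hρ : Measurable fun p : X × X => ρ p.1 p.2) (hsymm : ∀ ⦃x y⦄, F x y → F y x)
    {T : ℕ → X ≃ᵐ X} (hT : ∀ x y, F x y ↔ ∃ n, T n x = y) {w : X → X → ℝ≥0∞}
    (hw : Measurable fun p : X × X => w p.1 p.2) :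
    ∫⁻ x, ∑' y : {y | F y x}, w x y ∂μ =
      ∫⁻ x, ∑' y : {y | F y x}, ENNReal.ofReal (ρ y x) * w y x ∂μ := by
  let f (n : ℕ) : X → ℝ≥0∞ := (freshSet T n).indicator fun x => w x (T n x)
  have hf (n : ℕ) : Measurable (f n) :=
    (hw.comp (measurable_id.prodMk (T n).measurable)).indicator (measurableSet_freshSet n)
  have hF_symm (n : ℕ) (x : X) : F ((T n).symm x) x :=
    (hT _ _).2 ⟨n, (T n).apply_symm_apply x⟩
  have hf_symm (n : ℕ) :
      Measurable fun x => ENNReal.ofReal (ρ ((T n).symm x) x) * f n ((T n).symm x) :=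
    ((hρ.comp ((T n).symm.measurable.prodMk measurable_id)).ennreal_ofReal).mul
      ((hf n).comp (T n).symm.measurable)
  calc ∫⁻ x, ∑' y : {y | F y x}, w x y ∂μ
      = ∫⁻ x, ∑' n, f n x ∂μ := by
        simp only [tsum_class_eq_tsum_apply hsymm hT]
        rfl
    _ = ∑' n, ∫⁻ x, f n x ∂μ := lintegral_tsum fun n => (hf n).aemeasurable
    _ = ∑' n, ∫⁻ x, ENNReal.ofReal (ρ ((T n).symm x) x) * f n ((T n).symm x) ∂μ :=
        tsum_congr fun n => (hμ.lintegral_mul_comp hρ (hF_symm n) (hf n)).symm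
    _ = ∫⁻ x, ∑' n, ENNReal.ofReal (ρ ((T n).symm x) x) * f n ((T n).symm x) ∂μ :=
        (lintegral_tsum fun n => (hf_symm n).aemeasurable).symm
    _ = ∫⁻ x, ∑' y : {y | F y x}, ENNReal.ofReal (ρ y x) * w y x ∂μ := by
        refine lintegral_congr fun x => ?_
        rw [tsum_class_eq_tsum_symm_apply hT fun y => ENNReal.ofReal (ρ y x) * w y x]
        refine tsum_congr fun n => ?_
        simp only [f, indicator, (T n).apply_symm_apply, mul_ite, mul_zero]

end MassTransport

section ClassSize

variable {F : X → X → Prop} {ρ : X → X → ℝ}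

theorem eSize_inter (Y Z : Set X) (z : X) :
    eSize ρ (Y ∩ Z) z = ∑' y : Z, Y.indicator (fun y => ENNReal.ofReal (ρ y z)) y := by
  rw [eSize, tsum_subtype (Y ∩ Z) fun y => ENNReal.ofReal (ρ y z), inter_comm,
    ← indicator_indicator, ← tsum_subtype]

theorem eSize_ne_top_of_finite {Y : Set X} (hY : Y.Finite) (z : X) : eSize ρ Y z ≠ ∞ := by
  have := hY.fintype
  rw [eSize, tsum_fintype]
  exact ENNReal.sum_ne_top.2 fun y _ => ENNReal.ofReal_ne_top

variable [MeasurableSpace X]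

theorem IsCocycle.eSize_class_eq_mul (hρ : IsCocycle F ρ) (hF : Equivalence F) {x y : X}
    (hxy : F x y) :
    eSize ρ {z | F z y} y = eSize ρ {z | F z x} x * ENNReal.ofReal (ρ x y) := by
  have hclass : {z | F z y} = {z | F z x} :=
    ext fun z => ⟨fun h => hF.trans h (hF.symm hxy), fun h => hF.trans h hxy⟩
  rw [hclass, eSize, eSize, ← ENNReal.tsum_mul_right]
  refine tsum_congr fun z => ?_
  rw [hρ.2.2 z.2 hxy, ENNReal.ofReal_mul (hρ.2.1 z.2).le]

theorem IsCocycle.ofReal_div_eSize_class (hρ : IsCocycle F ρ) (hF : Equivalence F) {x y : X}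
    (hxy : F x y) :
    ENNReal.ofReal (ρ x y) / eSize ρ {z | F z y} y = (eSize ρ {z | F z x} x)⁻¹ := by
  have hne : ENNReal.ofReal (ρ x y) ≠ 0 := ENNReal.ofReal_ne_zero_iff.2 (hρ.2.1 hxy)
  rw [hρ.eSize_class_eq_mul hF hxy]
  nth_rw 1 [← one_mul (ENNReal.ofReal _)]
  rw [ENNReal.mul_div_mul_right _ _ hne ENNReal.ofReal_ne_top, one_div]

theorem IsCocycle.eSize_class_ne_zero (hρ : IsCocycle F ρ) {x : X} (hxx : F x x) :
    eSize ρ {z | F z x} x ≠ 0 := fun h => by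
  have hx : ENNReal.ofReal (ρ x x) = 0 := ENNReal.tsum_eq_zero.1 h ⟨x, hxx⟩
  exact (hρ.2.1 hxx).not_ge (ENNReal.ofReal_eq_zero.1 hx)

theorem IsCocycle.isCountableGraphUnion [StandardBorelSpace X] (hρ : IsCocycle F ρ)
    (hsymm : ∀ ⦃x y⦄, F x y → F y x) (hFm : MeasurableSet {p : X × X | F p.1 p.2})
    (hfin : ∀ x, eSize ρ {y | F y x} x ≠ ∞) :
    IsCountableGraphUnion {p : X × X | F p.1 p.2} := by
  refine .of_tsum_ne_top hFm (w := fun p => ENNReal.ofReal (ρ p.2 p.1))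
    (hρ.1.comp measurable_swap).ennreal_ofReal (fun p hp => ?_) fun x => ?_
  · exact ENNReal.ofReal_ne_zero_iff.2 (hρ.2.1 (hsymm hp))
  · have hclass : Prod.mk x ⁻¹' {p | F p.1 p.2} = {y | F y x} :=
      ext fun y => ⟨fun h => hsymm h, fun h => hsymm h⟩
    rw [hclass]
    exact hfin x

end ClassSize

section ClassTransport

variable {F : X → X → Prop} {ρ : X → X → ℝ} {B : Set X}

/-- The mass that `x` sends to a member `y` of its `F`-class when every point of `B` spreads a unit
mass over its class proportionally to `ρ`. -/
noncomputable def classTransport (F : X → X → Prop) (ρ : X → X → ℝ) (B : Set X) (x y : X) :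
    ℝ≥0∞ :=
  B.indicator (fun x => ENNReal.ofReal (ρ y x) / eSize ρ {z | F z x} x) x

variable [MeasurableSpace X]

theorem measurable_classTransport [MeasurableEq X] (hρ : Measurable fun p : X × X => ρ p.1 p.2)
    (hsymm : ∀ ⦃x y⦄, F x y → F y x) {T : ℕ → X ≃ᵐ X} (hT : ∀ x y, F x y ↔ ∃ n, T n x = y)
    (hB : MeasurableSet B) : Measurable fun p : X × X => classTransport F ρ B p.1 p.2 := by
  have hρ_swap : Measurable fun p : X × X => ENNReal.ofReal (ρ p.2 p.1) :=
    (hρ.comp measurable_swap).ennreal_ofReal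
  have hsize : Measurable fun x => eSize ρ {z | F z x} x :=
    measurable_tsum_class (g := fun x y => ENNReal.ofReal (ρ y x)) hsymm hT hρ_swap
  exact (hρ_swap.div (hsize.comp measurable_fst)).indicator (measurable_fst hB)

theorem IsCocycle.tsum_classTransport (hρ : IsCocycle F ρ) {x : X} (hxx : F x x)
    (hfin : eSize ρ {y | F y x} x ≠ ∞) :
    ∑' y : {y | F y x}, classTransport F ρ B x y = B.indicator 1 x := by
  by_cases hx : x ∈ B
  · simp only [classTransport, indicator_of_mem hx, div_eq_mul_inv, ENNReal.tsum_mul_right,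
      Pi.one_apply]
    exact ENNReal.mul_inv_cancel (hρ.eSize_class_ne_zero hxx) hfin
  · simp only [classTransport, indicator_of_notMem hx, tsum_zero]

theorem IsCocycle.tsum_mul_classTransport (hρ : IsCocycle F ρ) (hF : Equivalence F) (x : X) :
    ∑' y : {y | F y x}, ENNReal.ofReal (ρ y x) * classTransport F ρ B y x =
      relSize ρ (B ∩ {y | F y x}) {y | F y x} x := by
  rw [relSize, eSize_inter, div_eq_mul_inv, ← ENNReal.tsum_mul_right]
  refine tsum_congr fun y => ?_
  by_cases hy : (y : X) ∈ B
  · simp only [classTransport, indicator_of_mem hy]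
    rw [hρ.ofReal_div_eSize_class hF (hF.symm y.2)]
  · simp only [classTransport, indicator_of_notMem hy, mul_zero, zero_mul]

end ClassTransport

theorem stmt13_general [MeasurableSpace X] [StandardBorelSpace X]
    (F : X → X → Prop) (hF : Equivalence F) (hFm : MeasurableSet {p : X × X | F p.1 p.2})
    (ρ : X → X → ℝ) (hρ : IsCocycle F ρ) (hfin : ∀ x, eSize ρ {y | F y x} x ≠ ∞)
    (μ : Measure X) (hμ : IsInvariant F ρ μ) (B : Set X) (hB : MeasurableSet B) :
    μ B = ∫⁻ x, relSize ρ (B ∩ {y | F y x}) {y | F y x} x ∂μ := by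
  have hsymm ⦃x y : X⦄ (h : F x y) : F y x := hF.symm h
  obtain ⟨T, hT⟩ :=
    (hρ.isCountableGraphUnion hsymm hFm hfin).exists_seq_measurableEquiv hF.refl hsymm
  calc μ B = ∫⁻ x, B.indicator 1 x ∂μ := (lintegral_indicator_one hB).symm
    _ = ∫⁻ x, ∑' y : {y | F y x}, classTransport F ρ B x y ∂μ :=
        lintegral_congr fun x => (hρ.tsum_classTransport (hF.refl x) (hfin x)).symm
    _ = ∫⁻ x, ∑' y : {y | F y x}, ENNReal.ofReal (ρ y x) * classTransport F ρ B y x ∂μ :=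
        hμ.lintegral_tsum_class hρ.1 hsymm hT (measurable_classTransport hρ.1 hsymm hT hB)
    _ = ∫⁻ x, relSize ρ (B ∩ {y | F y x}) {y | F y x} x ∂μ :=
        lintegral_congr fun x => hρ.tsum_mul_classTransport hF x

/-- For a `ρ`-invariant measure `μ`, `μ(B) = ∫ |B ∩ [x]_F|^{[x]_F}_ρ dμ(x)` for all Borel
`B ⊆ X` and finite Borel subequivalence relations `F` of `E`. -/
theorem stmt13 [MeasurableSpace X] [StandardBorelSpace X]
    (E : X → X → Prop) (hE : IsCBER E)
    (ρ : X → X → ℝ) (hρ : IsCocycle E ρ)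
    (μ : Measure X) (hμ : IsInvariant E ρ μ) :
    ∀ B : Set X, MeasurableSet B → ∀ F : X → X → Prop, IsFinSubequiv E F →
      μ B = ∫⁻ x, relSize ρ (B ∩ {y | F y x}) {y | F y x} x ∂μ := by
  rintro B hB F ⟨hF, hFm, hFE, hfin⟩
  exact stmt13_general F hF hFm ρ (hρ.mono hFE)
    (fun x => eSize_ne_top_of_finite ((hfin x).subset fun _ hy => hF.symm hy) x)
    μ (hμ.mono hFE) B hB

end CocycleNadkarni
end

section
/- Let X be a standard Borel space, E a countable Borel equivalence relation on X, R, S ⊆ E Borel sets, and ρ : E → (0,∞) a Borel cocycle. Then every Borel measure μ that is invariant with respect to the restriction of ρ to R ∪ S is invariant with respect to the restriction of ρ to the composition R ∘ S = {(x,z) : ∃y, x R y and y S z}. -/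
open MeasureTheory Set ENNReal

namespace CocycleNadkarni

variable {X : Type*} {Γ : Type*}

/-! Let `T` be an injection whose graph is contained in `(R ∘ S)⁻¹`. By the Lusin–Novikov theorem,
the pairs `(x, y)` with `T x R y` and `y S x` form countably many graphs of Borel injections `F n`,
so the domain of `T` is covered by Borel sets on which `T = G n ∘ F n`, where `F n` moves points
along `S` and `G n` moves points along `R`. On each piece the change of variables formula and the
cocycle identity give the density of `T`, and the pieces are summed after being made disjoint.

The Lusin–Novikov theorem is proved by contradiction. If the domain of `f` is not a countable union
of Borel sets on which `f` is injective, a Cantor scheme of open sets is built so that the sets of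
each level meet a common fibre of `f`, even after removal of any such union. Novikov separation
makes it possible to split every set of a level at once. By continuity, all branches then end in a
single fibre, which is therefore uncountable. -/

section Separation

variable {Y Z : Type*}

theorem analyticSet_inter_s14 [TopologicalSpace Y] [T2Space Y] {s t : Set Y} (hs : AnalyticSet s)
    (ht : AnalyticSet t) : AnalyticSet (s ∩ t) := by
  rw [inter_eq_iInter]
  exact AnalyticSet.iInter (Bool.rec ht hs)

theorem exists_measurableSet_superset_disjoint_biInter [TopologicalSpace Y] [PolishSpace Y]
    [MeasurableSpace Y] [BorelSpace Y] {ι : Type*} {E : ι → Set Y} (hE : ∀ i, AnalyticSet (E i))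
    (s : Finset ι) {C : Set Y} (hC : AnalyticSet C) (h : Disjoint C (⋂ i ∈ s, E i)) :
    ∃ N : ι → Set Y, (∀ i, MeasurableSet (N i)) ∧ (∀ i, E i ⊆ N i) ∧
      Disjoint C (⋂ i ∈ s, N i) := by
  classical
  induction s using Finset.induction_on generalizing C with
  | empty => exact ⟨fun _ => univ, fun _ => .univ, fun _ => subset_univ _, by simpa using h⟩
  | insert a s ha ih =>
    have hCa : Disjoint (C ∩ E a) (⋂ i ∈ s, E i) := by
      rwa [Finset.set_biInter_insert, disjoint_iff_inter_eq_empty, ← inter_assoc,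
        ← disjoint_iff_inter_eq_empty] at h
    obtain ⟨N, hNm, hEN, hCN⟩ := ih (analyticSet_inter_s14 hC (hE a)) hCa
    have hCNa : AnalyticSet (C ∩ ⋂ i ∈ s, N i) :=
      analyticSet_inter_s14 hC (s.measurableSet_biInter fun i _ => hNm i).analyticSet
    obtain ⟨M, hEM, hM, hMm⟩ := (hE a).measurablySeparable hCNa <| by
      rw [disjoint_iff_inter_eq_empty] at hCN ⊢
      rw [← hCN, inter_left_comm, inter_assoc]
    refine ⟨Function.update N a M, fun i => ?_, fun i => ?_, ?_⟩
    · obtain rfl | hi := eq_or_ne i a <;> simp [*]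
    · obtain rfl | hi := eq_or_ne i a <;> simp [*]
    · have hN : ⋂ i ∈ s, Function.update N a M i = ⋂ i ∈ s, N i :=
        iInter₂_congr fun i hi => Function.update_of_ne (ne_of_mem_of_not_mem hi ha) _ _
      rw [Finset.set_biInter_insert, hN, Function.update_self]
      rw [disjoint_iff_inter_eq_empty] at hM ⊢
      rw [← hM, inter_left_comm, inter_comm]

theorem exists_measurableSet_superset_iInter_eq_empty [TopologicalSpace Y] [PolishSpace Y]
    [MeasurableSpace Y] [BorelSpace Y] {ι : Type*} [Finite ι] {E : ι → Set Y}
    (hE : ∀ i, AnalyticSet (E i)) (h : ⋂ i, E i = ∅) :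
    ∃ N : ι → Set Y, (∀ i, MeasurableSet (N i)) ∧ (∀ i, E i ⊆ N i) ∧ ⋂ i, N i = ∅ := by
  have := Fintype.ofFinite ι
  simpa using exists_measurableSet_superset_disjoint_biInter hE Finset.univ
    MeasurableSet.univ.analyticSet (by simp [h])

theorem analyticSet_setOf_nontrivial_inter_preimage [MeasurableSpace Z] [StandardBorelSpace Z]
    [TopologicalSpace Y] [PolishSpace Y] [MeasurableSpace Y] [BorelSpace Y] {f : Z → Y}
    (hf : Measurable f) {A : Set Z} (hA : MeasurableSet A) :
    AnalyticSet {y | (A ∩ f ⁻¹' {y}).Nontrivial} := by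
  have hm : MeasurableSet ((A ×ˢ A ∩ {p : Z × Z | f p.1 = f p.2}) \ diagonal Z) :=
    ((hA.prod hA).inter (measurableSet_eq_fun (by fun_prop) (by fun_prop))).diff
      measurableSet_diagonal
  convert! hm.analyticSet_image (hf.comp measurable_fst) using 1
  ext y
  constructor
  · rintro ⟨z, ⟨hz, rfl⟩, w, ⟨hw, hwz⟩, hne⟩
    exact ⟨(z, w), ⟨⟨⟨hz, hw⟩, hwz.symm⟩, hne⟩, rfl⟩
  · rintro ⟨⟨z, w⟩, ⟨⟨⟨hz, hw⟩, hzw⟩, hne⟩, rfl⟩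
    exact ⟨z, ⟨hz, rfl⟩, w, ⟨hw, hzw.symm⟩, hne⟩

theorem injOn_diff_preimage_of_setOf_nontrivial_subset {f : Z → Y} {A : Set Z} {N : Set Y}
    (h : {y | (A ∩ f ⁻¹' {y}).Nontrivial} ⊆ N) : InjOn f (A \ f ⁻¹' N) := by
  rintro z ⟨hz, hzN⟩ w ⟨hw, -⟩ hzw
  by_contra hne
  exact hzN (h ⟨z, ⟨hz, rfl⟩, w, ⟨hw, hzw.symm⟩, hne⟩)

end Separation

section SigmaInjOn

variable {Y Z : Type*} [MeasurableSpace Z]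

/-- The set `B` is a countable union of measurable sets on each of which `f` is injective. These
sets are the members of the σ-ideal of the Lusin–Novikov theorem. -/
def IsSigmaInjOn (f : Z → Y) (B : Set Z) : Prop :=
  ∃ C : ℕ → Set Z, (∀ n, MeasurableSet (C n)) ∧ (∀ n, InjOn f (C n)) ∧ ⋃ n, C n = B

namespace IsSigmaInjOn

variable {f : Z → Y} {B : Set Z}

theorem measurableSet (h : IsSigmaInjOn f B) : MeasurableSet B := by
  obtain ⟨C, hC, -, rfl⟩ := h
  exact .iUnion hC

theorem of_injOn (hB : MeasurableSet B) (h : InjOn f B) : IsSigmaInjOn f B :=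
  ⟨fun _ => B, fun _ => hB, fun _ => h, iUnion_const B⟩

theorem iUnion {κ : Type*} [Countable κ] {B : κ → Set Z} (h : ∀ k, IsSigmaInjOn f (B k)) :
    IsSigmaInjOn f (⋃ k, B k) := by
  obtain _ | _ := isEmpty_or_nonempty κ
  · rw [iUnion_of_empty]
    exact of_injOn .empty (injOn_empty f)
  obtain ⟨e, he⟩ := exists_surjective_nat κ
  choose C hCm hCi hCB using h
  refine ⟨fun n => C (e n.unpair.1) n.unpair.2, fun _ => hCm _ _, fun _ => hCi _ _, ?_⟩
  rw [iUnion_unpair fun m n => C (e m) n]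
  simp only [hCB, he.iUnion_comp]

theorem union {C : Set Z} (hB : IsSigmaInjOn f B) (hC : IsSigmaInjOn f C) :
    IsSigmaInjOn f (B ∪ C) := by
  rw [union_eq_iUnion]
  exact iUnion (Bool.rec hC hB)

theorem exists_iUnion_injOn_injOn {W : Type*} {g : Z → W} (hf : IsSigmaInjOn f B)
    (hg : IsSigmaInjOn g B) : ∃ Q : ℕ → Set Z, (∀ n, MeasurableSet (Q n)) ∧
      (∀ n, InjOn f (Q n)) ∧ (∀ n, InjOn g (Q n)) ∧ ⋃ n, Q n = B := by
  obtain ⟨C, hCm, hCi, hC⟩ := hf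
  obtain ⟨D, hDm, hDi, hD⟩ := hg
  refine ⟨fun n => C n.unpair.1 ∩ D n.unpair.2, fun _ => (hCm _).inter (hDm _),
    fun _ => (hCi _).mono inter_subset_left, fun _ => (hDi _).mono inter_subset_right, ?_⟩
  rw [iUnion_unpair fun m n => C m ∩ D n, ← iUnion_inter_iUnion, hC, hD, inter_self]

theorem of_comp_val {P : Set Z} (hP : MeasurableSet P)
    (h : IsSigmaInjOn (fun z : P => f z) univ) : IsSigmaInjOn f P := by
  obtain ⟨C, hCm, hCi, hC⟩ := h
  refine ⟨fun n => Subtype.val '' C n, fun n => hP.subtype_image (hCm n), fun n => ?_, ?_⟩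
  · exact (hCi n).image_of_comp
  · rw [← image_iUnion, hC, image_univ, Subtype.range_coe]

end IsSigmaInjOn

/-- The sets `U i` cannot be kept from meeting a common fibre of `f` by removing a set on which `f`
is σ-injective. In the proof of the Lusin–Novikov theorem this is the invariant carried by the
levels of a Cantor scheme. -/
def IsFiberLarge {ι : Type*} (f : Z → Y) (U : ι → Set Z) : Prop :=
  ∀ B, IsSigmaInjOn f B → (⋂ i, f '' (U i \ B)).Nonempty

namespace IsFiberLarge

variable {ι κ : Type*} {f : Z → Y} {U : ι → Set Z} {B : Set Z}

theorem comp (h : IsFiberLarge f U) (e : κ → ι) : IsFiberLarge f (U ∘ e) :=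
  fun B hB => (h B hB).mono (iInter_mono' fun k => ⟨e k, subset_rfl⟩)

theorem nonempty_iInter_image (h : IsFiberLarge f U) : (⋂ i, f '' U i).Nonempty := by
  simpa only [sdiff_empty] using h ∅ (.of_injOn .empty (injOn_empty f))

theorem const_univ_of_not_isSigmaInjOn (h : ¬ IsSigmaInjOn f univ) :
    IsFiberLarge f (fun _ : ι => univ) := by
  intro B hB
  obtain ⟨z, hz⟩ : ∃ z, z ∉ B := by
    by_contra! hall
    exact h (eq_univ_of_forall hall ▸ hB)
  exact ⟨f z, mem_iInter.2 fun _ => ⟨z, ⟨trivial, hz⟩, rfl⟩⟩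

-- If no fibre had two points in every `U i \ B`, Novikov separation would produce Borel sets `N i`
-- with empty intersection such that `f` is injective on each `(U i \ B) \ f ⁻¹' N i`.
theorem exists_forall_nontrivial [StandardBorelSpace Z] [MeasurableSpace Y] [StandardBorelSpace Y]
    [Finite ι] (h : IsFiberLarge f U) (hf : Measurable f) (hU : ∀ i, MeasurableSet (U i))
    (hB : IsSigmaInjOn f B) : ∃ y, ∀ i, ((U i \ B) ∩ f ⁻¹' {y}).Nontrivial := by
  let := upgradeStandardBorel Y
  have hUB i : MeasurableSet (U i \ B) := (hU i).diff hB.measurableSet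
  by_contra! hnone
  obtain ⟨N, hNm, hN, hNe⟩ := exists_measurableSet_superset_iInter_eq_empty
    (fun i => analyticSet_setOf_nontrivial_inter_preimage hf (hUB i)) <| by
      simpa only [eq_empty_iff_forall_notMem, mem_iInter, mem_ofPred_eq, not_forall,
        not_nontrivial_iff] using hnone
  have hrest : IsSigmaInjOn f (⋃ i, (U i \ B) \ f ⁻¹' N i) := .iUnion fun i =>
    .of_injOn ((hUB i).diff (hf (hNm i))) (injOn_diff_preimage_of_setOf_nontrivial_subset (hN i))
  obtain ⟨y, hy⟩ := h _ (hB.union hrest)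
  refine notMem_empty y (hNe ▸ mem_iInter.2 fun i => ?_)
  obtain ⟨z, ⟨hz, hzB⟩, rfl⟩ := mem_iInter.1 hy i
  by_contra hzN
  exact hzB (.inr (mem_iUnion.2 ⟨i, ⟨hz, fun hB => hzB (.inl hB)⟩, hzN⟩))

theorem exists_isSigmaInjOn_forall_isFiberLarge {J : Type*} [Countable J] (f : Z → Y)
    (V : J → κ → Set Z) : ∃ B, IsSigmaInjOn f B ∧
      ∀ j, (⋂ k, f '' (V j k \ B)).Nonempty → IsFiberLarge f (V j) := by
  have hwitness j : ∃ B, IsSigmaInjOn f B ∧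
      ((⋂ k, f '' (V j k \ B)).Nonempty → IsFiberLarge f (V j)) := by
    by_cases hj : IsFiberLarge f (V j)
    · exact ⟨∅, .of_injOn .empty (injOn_empty f), fun _ => hj⟩
    · obtain ⟨B, hB, hempty⟩ : ∃ B, IsSigmaInjOn f B ∧ ¬ (⋂ k, f '' (V j k \ B)).Nonempty := by
        simpa only [IsFiberLarge, not_forall, exists_prop] using hj
      exact ⟨B, hB, fun hne => (hempty hne).elim⟩
  choose B hB hV using hwitness
  refine ⟨⋃ j, B j, .iUnion hB, fun j hne => hV j (hne.mono ?_)⟩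
  exact iInter_mono fun k => image_mono (sdiff_subset_sdiff_right (subset_iUnion B j))

end IsFiberLarge

end SigmaInjOn

section CantorScheme

variable {Y Z : Type*}

theorem exists_mem_basis_closure_subset_ediam_le [PseudoEMetricSpace Z] {b : Set (Set Z)}
    (hb : TopologicalSpace.IsTopologicalBasis b) {O : Set Z} (hO : IsOpen O) {z : Z} (hz : z ∈ O)
    {ε : ℝ≥0∞} (hε : 0 < ε) :
    ∃ V ∈ b, z ∈ V ∧ closure V ⊆ O ∧ Metric.ediam V ≤ ε := by
  obtain ⟨δ, hδ, hδε⟩ : ∃ δ > 0, 2 * δ ≤ ε := ⟨ε / 2, ENNReal.half_pos hε.ne',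
    (ENNReal.mul_div_cancel two_ne_zero ofNat_ne_top).le⟩
  obtain ⟨V, hVb, hzV, hV⟩ := hb.exists_closure_subset
    (Filter.inter_mem (hO.mem_nhds hz) (Metric.eball_mem_nhds z hδ))
  refine ⟨V, hVb, hzV, hV.trans inter_subset_left, ?_⟩
  calc Metric.ediam V ≤ Metric.ediam (Metric.eball z δ) :=
        Metric.ediam_mono (subset_closure.trans (hV.trans inter_subset_right))
    _ ≤ 2 * δ := Metric.ediam_eball_le
    _ ≤ ε := hδε

theorem exists_basis_pair_of_nontrivial [EMetricSpace Z] {b : Set (Set Z)}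
    (hb : TopologicalSpace.IsTopologicalBasis b) {U s : Set Z} (hU : IsOpen U) (hsU : s ⊆ U)
    (hs : s.Nontrivial) {ε : ℝ≥0∞} (hε : 0 < ε) :
    ∃ V : Bool → b, (∀ c, ((V c : Set Z) ∩ s).Nonempty) ∧ (∀ c, closure (V c : Set Z) ⊆ U) ∧
      Disjoint (V false : Set Z) (V true) ∧ ∀ c, Metric.ediam (V c : Set Z) ≤ ε := by
  obtain ⟨z, hz, w, hw, hzw⟩ := hs
  obtain ⟨O, O', hO, hO', hzO, hwO', hdisj⟩ := t2_separation hzw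
  obtain ⟨V, hVb, hzV, hVO, hVε⟩ :=
    exists_mem_basis_closure_subset_ediam_le hb (hU.inter hO) ⟨hsU hz, hzO⟩ hε
  obtain ⟨W, hWb, hwW, hWO', hWε⟩ :=
    exists_mem_basis_closure_subset_ediam_le hb (hU.inter hO') ⟨hsU hw, hwO'⟩ hε
  obtain ⟨hVU, hVO⟩ := subset_inter_iff.1 hVO
  obtain ⟨hWU, hWO'⟩ := subset_inter_iff.1 hWO'
  refine ⟨fun c => cond c ⟨W, hWb⟩ ⟨V, hVb⟩, ?_, ?_, ?_, ?_⟩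
  · exact Bool.rec ⟨z, hzV, hz⟩ ⟨w, hwW, hw⟩
  · exact Bool.rec hVU hWU
  · exact hdisj.mono (subset_closure.trans hVO) (subset_closure.trans hWO')
  · exact Bool.rec hVε hWε

-- Only countably many families of basic open sets are candidates for `V`, so a single σ-injective
-- set `B` rules out all those that are not large. The points supplied by
-- `exists_forall_nontrivial` outside `B` have neighbourhoods forming a family not ruled out by `B`.
theorem IsFiberLarge.exists_split [MetricSpace Z] [CompleteSpace Z] [SecondCountableTopology Z]
    [MeasurableSpace Z] [BorelSpace Z] [MeasurableSpace Y] [StandardBorelSpace Y]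
    {ι : Type*} [Finite ι] {f : Z → Y} {U : ι → Set Z} (h : IsFiberLarge f U) (hf : Measurable f)
    (hU : ∀ i, IsOpen (U i)) {ε : ℝ≥0∞} (hε : 0 < ε) :
    ∃ V : ι × Bool → Set Z, (∀ k, IsOpen (V k)) ∧ IsFiberLarge f V ∧
      (∀ i c, closure (V (i, c)) ⊆ U i) ∧ (∀ i, Disjoint (V (i, false)) (V (i, true))) ∧
      ∀ k, Metric.ediam (V k) ≤ ε := by
  let b := TopologicalSpace.countableBasis Z
  have hb : TopologicalSpace.IsTopologicalBasis b := TopologicalSpace.isBasis_countableBasis Z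
  have : Countable b := (TopologicalSpace.countable_countableBasis Z).to_subtype
  obtain ⟨B, hB, hlarge⟩ :=
    IsFiberLarge.exists_isSigmaInjOn_forall_isFiberLarge f fun (V : ι × Bool → b) k => (V k : Set Z)
  obtain ⟨y, hy⟩ := h.exists_forall_nontrivial hf (fun i => (hU i).measurableSet) hB
  choose V hVne hVU hVdisj hVε using fun i => exists_basis_pair_of_nontrivial hb (hU i)
    (inter_subset_left.trans sdiff_subset) (hy i) hε
  refine ⟨fun k => V k.1 k.2, fun k => hb.isOpen (V k.1 k.2).2, ?_, hVU, hVdisj,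
    fun k => hVε k.1 k.2⟩
  refine hlarge (fun k => V k.1 k.2) ⟨y, mem_iInter.2 fun k => ?_⟩
  obtain ⟨z, hzV, ⟨-, hzB⟩, hzy⟩ := hVne k.1 k.2
  exact ⟨z, ⟨hzV, hzB⟩, hzy⟩

theorem exists_cantorScheme_of_not_isSigmaInjOn [MetricSpace Z] [CompleteSpace Z]
    [SecondCountableTopology Z] [MeasurableSpace Z] [BorelSpace Z] [MeasurableSpace Y]
    [StandardBorelSpace Y] {f : Z → Y} (hf : Measurable f) (h : ¬ IsSigmaInjOn f univ) :
    ∃ A : List Bool → Set Z, CantorScheme.ClosureAntitone A ∧ CantorScheme.Disjoint A ∧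
      (∀ l, Metric.ediam (A l) ≤ (l.length : ℝ≥0∞)⁻¹) ∧
      ∀ n, ∃ y, ∀ l : List Bool, l.length = n → y ∈ f '' A l := by
  let Level (n : ℕ) := {U : List.Vector Bool n → Set Z // (∀ v, IsOpen (U v)) ∧ IsFiberLarge f U}
  have hsplit (n : ℕ) (U : Level n) : ∃ V : Level (n + 1),
      (∀ v c, closure (V.1 (c ::ᵥ v)) ⊆ U.1 v) ∧
      (∀ v, Disjoint (V.1 (false ::ᵥ v)) (V.1 (true ::ᵥ v))) ∧
      ∀ v, Metric.ediam (V.1 v) ≤ ((n + 1 : ℕ) : ℝ≥0∞)⁻¹ := by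
    obtain ⟨V, hVo, hV, hVU, hVdisj, hVε⟩ := U.2.2.exists_split hf U.2.1
      (ε := ((n + 1 : ℕ) : ℝ≥0∞)⁻¹) (ENNReal.inv_pos.2 (natCast_ne_top _))
    let e (v : List.Vector Bool (n + 1)) : List.Vector Bool n × Bool := (v.tail, v.head)
    exact ⟨⟨V ∘ e, fun v => hVo (e v), hV.comp e⟩, hVU, hVdisj, fun v => hVε (e v)⟩
  choose next hnextU hnextdisj hnextε using hsplit
  let L (n : ℕ) : Level n := n.rec
    ⟨fun _ => univ, fun _ => isOpen_univ, .const_univ_of_not_isSigmaInjOn h⟩ next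
  refine ⟨fun l => (L l.length).1 ⟨l, rfl⟩, ?_, fun l => ?_, ?_, fun n => ?_⟩
  · exact fun l c => hnextU l.length (L l.length) ⟨l, rfl⟩ c
  · rintro (_ | _) (_ | _) hne
    · exact absurd rfl hne
    · exact hnextdisj _ _ ⟨l, rfl⟩
    · exact (hnextdisj _ _ ⟨l, rfl⟩).symm
    · exact absurd rfl hne
  · rintro (_ | ⟨c, l⟩)
    · simp
    · exact hnextε l.length _ _
  · obtain ⟨y, hy⟩ := (L n).2.2.nonempty_iInter_image
    refine ⟨y, ?_⟩
    rintro l rfl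
    exact mem_iInter.1 hy ⟨l, rfl⟩

theorem uncountable_nat_bool : Uncountable (ℕ → Bool) :=
  Cardinal.aleph0_lt_mk_iff.1 (by simp [Cardinal.aleph0_lt_continuum])

theorem exists_not_countable_preimage_of_cantorScheme [MetricSpace Z] [CompleteSpace Z]
    [TopologicalSpace Y] [T2Space Y] {f : Z → Y} (hf : Continuous f) {A : List Bool → Set Z}
    (hanti : CantorScheme.ClosureAntitone A) (hdisj : CantorScheme.Disjoint A)
    (hdiam : CantorScheme.VanishingDiam A)
    (hfib : ∀ n, ∃ y, ∀ l : List Bool, l.length = n → y ∈ f '' A l) :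
    ∃ y, ¬ (f ⁻¹' {y}).Countable := by
  choose y z hzA hzy using hfib
  have hdom : (CantorScheme.inducedMap A).1 = univ := hanti.map_of_vanishingDiam hdiam
    fun l => ⟨_, hzA _ l rfl⟩
  let φ (α : ℕ → Bool) : Z := (CantorScheme.inducedMap A).2 ⟨α, hdom ▸ mem_univ α⟩
  have hφA (α : ℕ → Bool) (n : ℕ) : φ α ∈ A (PiNat.res α n) := CantorScheme.map_mem _ n
  have hφ : Function.Injective φ := fun α β hαβ => congrArg Subtype.val (hdisj.map_injective hαβ)
  have hlim (α : ℕ → Bool) : Filter.Tendsto y Filter.atTop (nhds (f (φ α))) := by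
    have hz : Filter.Tendsto (fun n => z n (PiNat.res α n) (PiNat.res_length α n)) Filter.atTop
        (nhds (φ α)) :=
      tendsto_iff_edist_tendsto_0.2 <| tendsto_of_tendsto_of_tendsto_of_le_of_le
        tendsto_const_nhds (hdiam α) (fun _ => zero_le)
        fun n => Metric.edist_le_ediam_of_mem (hzA n _ _) (hφA α n)
    exact ((hf.tendsto _).comp hz).congr fun n => hzy n _ _
  have hfiber (α : ℕ → Bool) : φ α ∈ f ⁻¹' {f (φ fun _ => false)} :=
    tendsto_nhds_unique (hlim α) (hlim _)
  have := uncountable_nat_bool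
  exact ⟨_, countable_coe_iff.not.1 (hφ.codRestrict hfiber).uncountable.not_countable⟩

end CantorScheme

section LusinNovikov

variable {Y Z : Type*}

theorem exists_polishSpace_borelSpace_continuous [MeasurableSpace Z] [StandardBorelSpace Z]
    [TopologicalSpace Y] [SecondCountableTopology Y] [MeasurableSpace Y] [OpensMeasurableSpace Y]
    {f : Z → Y} (hf : Measurable f) :
    ∃ _ : TopologicalSpace Z, PolishSpace Z ∧ BorelSpace Z ∧ Continuous f := by
  obtain ⟨t, hborel, hpolish⟩ := ‹StandardBorelSpace Z›
  obtain ⟨t', hle, hcont, hpolish'⟩ := hf.exists_continuous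
  refine ⟨t', hpolish', ?_, hcont⟩
  exact @BorelSpace.mk _ t' _
    (hborel.measurable_eq.trans (borel_eq_borel_of_le hpolish' hpolish hle).symm)

theorem isSigmaInjOn_univ_of_countable_preimage [MeasurableSpace Z] [StandardBorelSpace Z]
    [MeasurableSpace Y] [StandardBorelSpace Y] {f : Z → Y} (hf : Measurable f)
    (hc : ∀ y, (f ⁻¹' {y}).Countable) : IsSigmaInjOn f univ := by
  let := upgradeStandardBorel Y
  obtain ⟨_, _, _, hcont⟩ := exists_polishSpace_borelSpace_continuous hf
  let := TopologicalSpace.upgradeIsCompletelyMetrizable Z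
  by_contra h
  obtain ⟨A, hanti, hdisj, hdiam, hfib⟩ := exists_cantorScheme_of_not_isSigmaInjOn hf h
  have hvanish : CantorScheme.VanishingDiam A := fun α =>
    tendsto_of_tendsto_of_tendsto_of_le_of_le tendsto_const_nhds
      ENNReal.tendsto_inv_nat_nhds_zero (fun _ => zero_le) fun n => by
        simpa using hdiam (PiNat.res α n)
  obtain ⟨y, hy⟩ := exists_not_countable_preimage_of_cantorScheme hcont hanti hdisj hvanish hfib
  exact hy (hc y)

theorem isSigmaInjOn_of_countable_inter_preimage [MeasurableSpace Z] [StandardBorelSpace Z]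
    [MeasurableSpace Y] [StandardBorelSpace Y] {f : Z → Y} (hf : Measurable f) {P : Set Z}
    (hP : MeasurableSet P) (hc : ∀ y, (P ∩ f ⁻¹' {y}).Countable) : IsSigmaInjOn f P := by
  have := hP.standardBorel
  refine .of_comp_val hP (isSigmaInjOn_univ_of_countable_preimage (hf.comp measurable_subtype_coe)
    fun y => ?_)
  exact ((hc y).preimage Subtype.val_injective).mono fun z hz => mem_inter z.2 hz

theorem exists_measurable_eqOn_comp [MeasurableSpace Z] [StandardBorelSpace Z]
    [MeasurableSpace Y] [MeasurableSpace.CountablySeparated Y] {W : Type*} [MeasurableSpace W]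
    (hne : Y → Nonempty W) {φ : Z → Y} {ψ : Z → W} (hφ : Measurable φ) (hψ : Measurable ψ)
    {Q : Set Z} (hQ : MeasurableSet Q) (hi : InjOn φ Q) :
    ∃ G : Y → W, Measurable G ∧ EqOn (G ∘ φ) ψ Q := by
  have := hQ.standardBorel
  have hemb : MeasurableEmbedding (Q.domRestrict φ) :=
    (hφ.comp measurable_subtype_coe).measurableEmbedding hi.injective
  obtain ⟨G, hG, hGφ⟩ := hemb.exists_measurable_extend (hψ.comp measurable_subtype_coe) hne
  exact ⟨G, hG, fun z hz => congrFun hGφ ⟨z, hz⟩⟩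

theorem exists_seq_measurable_injOn_graph [MeasurableSpace Z] [StandardBorelSpace Z]
    [MeasurableSpace Y] [StandardBorelSpace Y] (hne : Z → Nonempty Y) {P : Set (Z × Y)}
    (hP : MeasurableSet P) (hfst : ∀ z, {y | (z, y) ∈ P}.Countable)
    (hsnd : ∀ y, {z | (z, y) ∈ P}.Countable) :
    ∃ (A : ℕ → Set Z) (F : ℕ → Z → Y), (∀ n, MeasurableSet (A n)) ∧ (∀ n, Measurable (F n)) ∧
      (∀ n, InjOn (F n) (A n)) ∧ ∀ p, p ∈ P ↔ ∃ n, p.1 ∈ A n ∧ F n p.1 = p.2 := by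
  have hPfst : IsSigmaInjOn Prod.fst P := by
    refine isSigmaInjOn_of_countable_inter_preimage measurable_fst hP fun z => ?_
    refine ((hfst z).image (Prod.mk z)).mono ?_
    rintro ⟨_, y⟩ ⟨hp, rfl⟩
    exact ⟨y, hp, rfl⟩
  have hPsnd : IsSigmaInjOn Prod.snd P := by
    refine isSigmaInjOn_of_countable_inter_preimage measurable_snd hP fun y => ?_
    refine ((hsnd y).image (Prod.mk · y)).mono ?_
    rintro ⟨z, _⟩ ⟨hp, rfl⟩
    exact ⟨z, hp, rfl⟩
  obtain ⟨Q, hQm, hQfst, hQsnd, rfl⟩ := hPfst.exists_iUnion_injOn_injOn hPsnd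
  choose F hFm hF using fun n =>
    exists_measurable_eqOn_comp hne measurable_fst measurable_snd (hQm n) (hQfst n)
  refine ⟨fun n => Prod.fst '' Q n, F,
    fun n => (hQm n).image_of_measurable_injOn measurable_fst (hQfst n), hFm, fun n => ?_,
    fun p => mem_iUnion.trans (exists_congr fun n => ⟨fun hp => ?_, ?_⟩)⟩
  · exact ((hF n).injOn_iff.2 (hQsnd n)).image_of_comp
  · exact ⟨mem_image_of_mem _ hp, hF n hp⟩
  · rintro ⟨⟨q, hq, hqp⟩, hFp⟩
    have hqp' : q.2 = p.2 := by rw [← hFp, ← hqp]; exact (hF n hq).symm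
    rwa [← Prod.ext hqp hqp']

end LusinNovikov

section Jacobian

variable {Y Z : Type*} [MeasurableSpace X] [MeasurableSpace Y] [MeasurableSpace Z]

/-- The map `T` sends `μ` restricted to `B` to `ν` with density `w` computed at the source:
`ν (T[A]) = ∫_A w dμ` for all measurable `A ⊆ B`. -/
def HasJacobianOn (μ : Measure X) (ν : Measure Y) (T : X → Y) (w : X → ℝ≥0∞) (B : Set X) :
    Prop :=
  ∀ ⦃A⦄, MeasurableSet A → A ⊆ B → ν (T '' A) = ∫⁻ x in A, w x ∂μ

namespace HasJacobianOn

variable {μ : Measure X} {ν : Measure Y} {κ : Measure Z} {T : X → Y} {w : X → ℝ≥0∞}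
  {A B : Set X}

theorem mono (h : HasJacobianOn μ ν T w B) (hAB : A ⊆ B) : HasJacobianOn μ ν T w A :=
  fun _ hC hCA => h hC (hCA.trans hAB)

theorem congr {T' : X → Y} {w' : X → ℝ≥0∞} (h : HasJacobianOn μ ν T w B) (hT : EqOn T T' B)
    (hw : EqOn w w' B) : HasJacobianOn μ ν T' w' B := fun A hA hAB => by
  rw [← image_congr (hT.mono hAB), h hA hAB, setLIntegral_congr_fun hA (hw.mono hAB)]

theorem setLIntegral_image (h : HasJacobianOn μ ν T w B) (hB : MeasurableSet B)
    (hT : Measurable T) (hw : Measurable w) {g : Y → ℝ≥0∞} (hg : Measurable g) :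
    ∫⁻ y in T '' B, g y ∂ν = ∫⁻ x in B, w x * g (T x) ∂μ := by
  have hmap : ν.restrict (T '' B) = ((μ.restrict B).withDensity w).map T := by
    ext A hA
    rw [Measure.restrict_apply hA, Measure.map_apply hT hA, withDensity_apply _ (hT hA),
      Measure.restrict_restrict (hT hA), ← h ((hT hA).inter hB) inter_subset_right,
      image_preimage_inter]
  rw [hmap, lintegral_map hg hT]
  exact lintegral_withDensity_eq_lintegral_mul _ hw (hg.comp hT)

theorem comp [StandardBorelSpace X] [MeasurableSpace.CountablySeparated Y] {S : Y → Z}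
    {v : Y → ℝ≥0∞} (hS : HasJacobianOn ν κ S v (T '' B)) (hT : HasJacobianOn μ ν T w B)
    (hTm : Measurable T) (hTi : InjOn T B) (hw : Measurable w) (hv : Measurable v) :
    HasJacobianOn μ κ (S ∘ T) (fun x => w x * v (T x)) B := fun A hA hAB => by
  rw [image_comp, hS (hA.image_of_measurable_injOn hTm (hTi.mono hAB)) (image_mono hAB),
    (hT.mono hAB).setLIntegral_image hA hTm hw hv]

theorem measure_image_iUnion [StandardBorelSpace X] [MeasurableSpace.CountablySeparated Y]
    {A : ℕ → Set X} (h : ∀ n, HasJacobianOn μ ν T w (A n)) (hA : ∀ n, MeasurableSet (A n))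
    (hT : Measurable T) (hTi : InjOn T (⋃ n, A n)) :
    ν (T '' ⋃ n, A n) = ∫⁻ x in ⋃ n, A n, w x ∂μ := by
  have hm n : MeasurableSet (disjointed A n) := .disjointed hA n
  have hsub n : disjointed A n ⊆ ⋃ n, A n :=
    (disjointed_subset A n).trans (subset_iUnion A n)
  rw [← iUnion_disjointed, image_iUnion, measure_iUnion, lintegral_iUnion hm]
  · exact tsum_congr fun n => h n (hm n) (disjointed_subset A n)
  · exact disjoint_disjointed A
  · exact fun m n hmn => (disjoint_disjointed A hmn).image hTi (hsub m) (hsub n)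
  · exact fun n => (hm n).image_of_measurable_injOn hT (hTi.mono (hsub n))

end HasJacobianOn

end Jacobian

section Invariance

variable [MeasurableSpace X] {ρ : X → X → ℝ} {R S : Set (X × X)} {μ : Measure X}

namespace IsInvariantRel

theorem mono (h : IsInvariantRel S ρ μ) (hRS : R ⊆ S) : IsInvariantRel R ρ μ :=
  fun B T hB hT hTi hBT => h B T hB hT hTi fun x hx => hRS (hBT x hx)

theorem hasJacobianOn (h : IsInvariantRel R ρ μ) {T : X → X} (hT : Measurable T) {B : Set X}
    (hTi : InjOn T B) (hTR : ∀ x ∈ B, (T x, x) ∈ R) :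
    HasJacobianOn μ μ T (fun x => ENNReal.ofReal (ρ (T x) x)) B :=
  fun A hA hAB => h A T hA hT (hTi.mono hAB) fun x hx => hTR x (hAB hx)

theorem hasJacobianOn_of_factor [StandardBorelSpace X] (hR : IsInvariantRel R ρ μ)
    (hS : IsInvariantRel S ρ μ) (hρ : Measurable fun p : X × X => ρ p.1 p.2)
    (hρS : ∀ p ∈ S, 0 ≤ ρ p.1 p.2)
    (hρmul : ∀ ⦃x y z : X⦄, (x, y) ∈ R → (y, z) ∈ S → ρ x z = ρ x y * ρ y z)
    {T F : X → X} {A : Set X} (hA : MeasurableSet A) (hT : Measurable T) (hF : Measurable F)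
    (hTi : InjOn T A) (hFi : InjOn F A) (hTF : ∀ x ∈ A, (T x, F x) ∈ R)
    (hFS : ∀ x ∈ A, (F x, x) ∈ S) :
    HasJacobianOn μ μ T (fun x => ENNReal.ofReal (ρ (T x) x)) A := by
  obtain ⟨G, hG, hGF⟩ := exists_measurable_eqOn_comp (fun x => ⟨x⟩) hF hT hA hFi
  have hw {H : X → X} (hH : Measurable H) : Measurable fun x => ENNReal.ofReal (ρ (H x) x) :=
    (hρ.comp (hH.prodMk measurable_id)).ennreal_ofReal
  have hGR : ∀ y ∈ F '' A, (G y, y) ∈ R := by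
    rintro _ ⟨x, hx, rfl⟩
    have hGx : G (F x) = T x := hGF hx
    simpa only [hGx] using hTF x hx
  have hJG := hR.hasJacobianOn hG (hGF.injOn_iff.2 hTi).image_of_comp hGR
  refine (hJG.comp (hS.hasJacobianOn hF hFi hFS) hF hFi (hw hF) (hw hG)).congr hGF fun x hx => ?_
  have hGx : G (F x) = T x := hGF hx
  simp only [hGx]
  rw [hρmul (hTF x hx) (hFS x hx), mul_comm, ENNReal.ofReal_mul' (hρS _ (hFS x hx))]

end IsInvariantRel

theorem stmt14_general [StandardBorelSpace X] (hρ : Measurable fun p : X × X => ρ p.1 p.2)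
    (hρS : ∀ p ∈ S, 0 ≤ ρ p.1 p.2)
    (hρmul : ∀ ⦃x y z : X⦄, (x, y) ∈ R → (y, z) ∈ S → ρ x z = ρ x y * ρ y z)
    (hRm : MeasurableSet R) (hSm : MeasurableSet S) (hRc : ∀ x, {y | (x, y) ∈ R}.Countable)
    (hSc : ∀ x, {y | (x, y) ∈ S}.Countable) (hR : IsInvariantRel R ρ μ)
    (hS : IsInvariantRel S ρ μ) :
    IsInvariantRel {p : X × X | ∃ y : X, (p.1, y) ∈ R ∧ (y, p.2) ∈ S} ρ μ := by
  intro B T hB hT hTi hBT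
  let P : Set (X × X) := {p | p.1 ∈ B ∧ (T p.1, p.2) ∈ R ∧ (p.2, p.1) ∈ S}
  have hP : MeasurableSet P := (measurable_fst hB).inter <|
    (((hT.comp measurable_fst).prodMk measurable_snd) hRm).inter (measurable_swap hSm)
  obtain ⟨A, F, hA, hF, hFi, hAF⟩ := exists_seq_measurable_injOn_graph (fun x => ⟨x⟩) hP
    (fun x => (hRc (T x)).mono fun y hy => hy.2.1) (fun y => (hSc y).mono fun x hx => hx.2.2)
  have hPF n x (hx : x ∈ A n) : (x, F n x) ∈ P := (hAF _).2 ⟨n, hx, rfl⟩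
  obtain rfl : ⋃ n, A n = B := by
    refine Subset.antisymm (iUnion_subset fun n x hx => (hPF n x hx).1) fun x hx => ?_
    obtain ⟨y, hTy, hyx⟩ := hBT x hx
    obtain ⟨n, hn, -⟩ := (hAF (x, y)).1 ⟨hx, hTy, hyx⟩
    exact mem_iUnion.2 ⟨n, hn⟩
  refine HasJacobianOn.measure_image_iUnion (fun n => ?_) hA hT hTi
  exact hR.hasJacobianOn_of_factor hS hρ hρS hρmul (hA n) hT (hF n)
    (hTi.mono (subset_iUnion A n)) (hFi n) (fun x hx => (hPF n x hx).2.1)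
    fun x hx => (hPF n x hx).2.2

end Invariance

/-- A Borel measure invariant with respect to the restriction of `ρ` to `R ∪ S` is invariant
with respect to the restriction of `ρ` to the composition `R ∘ S`. -/
theorem stmt14 [MeasurableSpace X] [StandardBorelSpace X]
    (E : X → X → Prop) (hE : IsCBER E)
    (ρ : X → X → ℝ) (hρ : IsCocycle E ρ)
    (R S : Set (X × X)) (hRm : MeasurableSet R) (hSm : MeasurableSet S)
    (hRE : ∀ p ∈ R, E (Prod.fst p) (Prod.snd p)) (hSE : ∀ p ∈ S, E (Prod.fst p) (Prod.snd p))
    (μ : Measure X) (hμ : IsInvariantRel (R ∪ S) ρ μ) :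
    IsInvariantRel {p : X × X | ∃ y : X, (p.1, y) ∈ R ∧ (y, p.2) ∈ S} ρ μ := by
  obtain ⟨hρm, hρpos, hρmul⟩ := hρ
  have hcount {Q : Set (X × X)} (hQ : ∀ p ∈ Q, E p.1 p.2) (x : X) : {y | (x, y) ∈ Q}.Countable :=
    (hE.2.2 x).mono fun _ hy => hQ _ hy
  exact stmt14_general hρm (fun p hp => (hρpos (hSE p hp)).le)
    (fun _ _ _ hxy hyz => hρmul (hRE _ hxy) (hSE _ hyz)) hRm hSm (hcount hRE) (hcount hSE)
    (hμ.mono subset_union_left) (hμ.mono subset_union_right)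

end CocycleNadkarni
end
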